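/- arXiv:2202.05224 — 2 statements merged into one kernel-verified Lean document; each statement's English description precedes it below -/
import Mathlib

section
/- Let d ≥ 2, c > 0 and κ ≥ 1. There exists a constant C > 0 such that for every Schwartz function f on ℝ^d, every λ ∈ ℕ with λ ≥ κ + 1, every t ∈ ℝ with |t| ≥ cλ, every choice of sign ±, and every p ∈ [2,∞], ‖F⁻¹(ξ ↦ e^{±i t |ξ|} ζ_{κ,λ}(ξ) (F f)(ξ))‖_{L^p(ℝ^d)} ≤ C (|t|/λ)^{−((d−1)/2)(1 − 2/p)} ‖Q_{κ,λ} f‖_{L^{p'}(ℝ^d)}, where p' = p/(p−1) is the conjugate exponent. (The left-hand side is the half-wave evolution e^{±it|∇|} Q_{κ,λ} f.) -/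
/-!
# Dispersive estimate for half-wave evolutions localized to an annulus

Let `τ = |t|/λ ≥ c`. The half-wave evolution of `Q f` is the convolution of `Q f` with a kernel `K`,
the inverse Fourier transform of `e^{iT|ξ|} χ(|ξ| - λ)`, where `T = ±t` and `χ` is a smooth cutoff
equal to `1` on the support of the normalized cutoff `ζ⁰`. The symbol has modulus at most `1`, so the
convolution is a contraction on `L²` (Plancherel). The heart of the matter is the uniform bound
`|K| ≲ τ^{-(d-1)/2}` (`kernel_bound`), and `L^{p'} → L^p` bounds follow by interpolation.

*Kernel bound.* Stationary phase on spheres is replaced by a superposition of Gaussians. With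
`b = β/λ²`, write the symbol as `e^{-b|ξ|²} m(|ξ|²)`, `m(u) = e^{bu} e^{iT√u} χ(√u - λ)`
(`radSym`), and expand `m` by one-dimensional Fourier inversion. Then `K(x)` is the integral over `s`
of `m̂(s)` against the inverse Fourier transform at `x` of `e^{-(b - 2πis)|ξ|²}`, whose modulus is at
most `(π/|b - 2πis|)^{d/2}` (`kernel_le_integral`). Two regimes in `s` are distinguished.

* For `|s| ≥ δτ` the Gaussian factor is `≲ τ^{-d/2}`, and `‖m̂‖_{L¹} ≲ τ^{1/2}`
  (`radSym_fourier_L1`). The latter is a Bernstein-type inequality (`integral_norm_fourier_le`):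
  after removal of the linear phase `Tu/(2λ)`, `m` lives on an interval of length `≈ λ` and has
  derivative `O(τ/λ)`.
* For `|s| ≤ δτ` the Gaussian factor is only `≲ λ^d`, but in the variable `√u = λ + v` the integral
  defining `m̂(s)` has a phase without stationary points, and repeated integration by parts
  (`nonstationary_phase`) gives `|m̂(s)| ≲ λ |T|^{-d-1}` (`radSym_fourier_small`).

*Interpolation.* The constant must be uniform in `p ∈ [2, ∞]`, including the endpoints, where the
constants in the general Marcinkiewicz theorem degenerate. Splitting `g` at height `α(s)` so that the
high part contributes at most `s` pointwise to `K * g` gives `|K * g| ≤ 2 |K * g_low|` where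
`|K * g| ≥ 2s`. Integrating the resulting `L²` inequality against `s^{p-3} ds` yields the constant `2`
for every `p` (`interpolation_aux`, `eLpNorm_convOp_le`).
-/

open MeasureTheory Complex
open scoped RealInnerProductSpace ENNReal FourierTransform

/-- The normalized cutoff `ζ_κ⁰(s) = ζ_κ(s)/Σ_{ν∈ℤ} ζ_κ(s − ν)`. -/
noncomputable def zetaNorm (ζ : ℝ → ℝ) (s : ℝ) : ℝ := ζ s / ∑' ν : ℤ, ζ (s - ν)

/-- The annulus symbol `ζ_{κ,λ}(ξ) = ζ_κ⁰(|ξ| − λ)`. -/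
noncomputable def zetaAnn (d : ℕ) (ζ : ℝ → ℝ) (lam : ℕ) (ξ : EuclideanSpace ℝ (Fin d)) : ℝ :=
  zetaNorm ζ (‖ξ‖ - lam)

/-! ### Nonstationary phase -/

/-- Integration by parts `N` times in an oscillatory integral with phase `αv - wv²` and amplitude
supported in `(-κ, κ)`. The condition `4‖w‖κ ≤ ‖α‖` keeps the derivative `α(1 - 2wv/α)` of the phase
comparable to `α`; the powers of `(1 - 2wv/α)⁻¹` make the induction on `N` close. -/
theorem nonstationary_phase (κ R : ℝ) (hκ : 0 < κ) (hR : 0 ≤ R) (N : ℕ) :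
    ∀ χ : ℝ → ℂ, ContDiff ℝ (⊤ : ℕ∞) χ → (∃ r < κ, ∀ v, r < |v| → χ v = 0) → ∀ k : ℕ,
    ∃ C, 0 ≤ C ∧ ∀ α w : ℂ, α ≠ 0 → 4 * ‖w‖ * κ ≤ ‖α‖ →
      (∀ v : ℝ, |v| ≤ κ → ‖cexp (α * v - w * v ^ 2)‖ ≤ R) →
      ‖∫ v in (-κ)..κ, cexp (α * v - w * v ^ 2) * (χ v * ((1 - 2 * w / α * v)⁻¹) ^ k)‖
        ≤ C * (‖α‖ ^ N)⁻¹ := by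
  have hb : ∀ α w : ℂ, α ≠ 0 → 4 * ‖w‖ * κ ≤ ‖α‖ → ∀ v : ℝ, |v| ≤ κ →
      1 / 2 ≤ ‖1 - 2 * w / α * v‖ := by
    intro α w hα hw v hv
    have hα' : 0 < ‖α‖ := norm_pos_iff.2 hα
    have h1 : ‖2 * w / α * v‖ ≤ 1 / 2 := by
      rw [norm_mul, norm_div, norm_mul, Complex.norm_real, Real.norm_eq_abs]
      rw [div_mul_eq_mul_div, div_le_iff₀ hα']
      simp only [Complex.norm_ofNat]
      nlinarith [norm_nonneg w, mul_le_mul_of_nonneg_left hv (norm_nonneg w)]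
    have h2 := norm_sub_norm_le (1 : ℂ) (2 * w / α * v)
    simp only [norm_one] at h2
    linarith
  have hmem : ∀ v ∈ Set.uIcc (-κ) κ, |v| ≤ κ := by
    intro v hv
    rw [Set.uIcc_of_le (by linarith)] at hv
    exact abs_le.2 hv
  induction N with
  | zero =>
    intro χ hχ ⟨r, hr, hχ0⟩ k
    obtain ⟨B, hB⟩ := isCompact_Icc.exists_bound_of_continuousOn (s := Set.Icc (-κ) κ)
      hχ.continuous.continuousOn
    have hB0 : 0 ≤ B := (norm_nonneg _).trans (hB 0 ⟨by linarith, by linarith⟩)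
    refine ⟨R * (B * 2 ^ k) * (2 * κ), by positivity, fun α w hα hw hRb => ?_⟩
    have := intervalIntegral.norm_integral_le_of_norm_le_const (a := -κ) (b := κ)
      (f := fun v : ℝ => cexp (α * v - w * v ^ 2) * (χ v * ((1 - 2 * w / α * v)⁻¹) ^ k))
      (C := R * (B * 2 ^ k)) (by
        intro v hv
        have hv' := hmem v (Set.uIoc_subset_uIcc hv)
        rw [norm_mul, norm_mul, norm_pow, norm_inv]
        have h1 := hb α w hα hw v hv'
        have h2 : ‖1 - 2 * w / α * v‖⁻¹ ≤ 2 := by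
          rw [inv_le_comm₀ (by linarith) (by norm_num)]; linarith
        gcongr
        · exact hRb v hv'
        · exact hB v (abs_le.1 hv'))
    rw [show |κ - -κ| = 2 * κ by rw [abs_of_pos (by linarith)]; ring] at this
    simpa using this
  | succ N ih =>
    intro χ hχ ⟨r, hr, hχ0⟩ k
    have hχd : ContDiff ℝ (⊤ : ℕ∞) (deriv χ) := by
      have := (contDiff_infty_iff_deriv (𝕜 := ℝ) (f := χ)).1 hχ
      exact this.2
    have hχd0 : ∃ r < κ, ∀ v, r < |v| → deriv χ v = 0 := by
      refine ⟨r, hr, fun v hv => ?_⟩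
      have : χ =ᶠ[nhds v] fun _ => 0 := by
        filter_upwards [(isOpen_lt continuous_const continuous_abs).mem_nhds hv] with x hx
        exact hχ0 x hx
      rw [this.deriv_eq]; simp
    obtain ⟨C1, hC1, h1⟩ := ih (deriv χ) hχd hχd0 (k + 1)
    obtain ⟨C2, hC2, h2⟩ := ih χ hχ ⟨r, hr, hχ0⟩ (k + 2)
    refine ⟨C1 + (k + 1) / (2 * κ) * C2, by positivity, fun α w hα hw hRb => ?_⟩
    have hα' : 0 < ‖α‖ := norm_pos_iff.2 hα
    specialize h1 α w hα hw hRb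
    specialize h2 α w hα hw hRb
    set γ : ℂ := 2 * w / α with hγ
    have hγn : ‖γ‖ ≤ 1 / (2 * κ) := by
      rw [hγ, norm_div, norm_mul, div_le_div_iff₀ hα' (by positivity)]
      simp only [Complex.norm_ofNat]; linarith
    have hne : ∀ v : ℝ, |v| ≤ κ → (1 - γ * v : ℂ) ≠ 0 := by
      intro v hv h0
      have := hb α w hα hw v hv
      rw [← hγ, h0] at this; simp at this; linarith
    have hcont : ∀ (a : ℝ → ℂ), Continuous a → ∀ j : ℕ, IntervalIntegrable
        (fun v : ℝ => cexp (α * v - w * v ^ 2) * (a v * ((1 - γ * v)⁻¹) ^ j)) volume (-κ) κ := by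
      intro a ha j
      apply ContinuousOn.intervalIntegrable
      refine ContinuousOn.mul (by fun_prop) (ContinuousOn.mul ha.continuousOn ?_)
      refine ContinuousOn.pow (ContinuousOn.inv₀ (by fun_prop) ?_) j
      intro v hv
      exact hne v (hmem v hv)
    have hder : ∀ v ∈ Set.uIcc (-κ) κ, HasDerivAt
        (fun v : ℝ => cexp (α * v - w * v ^ 2) * (χ v * ((1 - γ * v)⁻¹) ^ (k + 1)))
        (α * (cexp (α * v - w * v ^ 2) * (χ v * ((1 - γ * v)⁻¹) ^ k))
          + (cexp (α * v - w * v ^ 2) * (deriv χ v * ((1 - γ * v)⁻¹) ^ (k + 1))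
          + (k + 1) * γ * (cexp (α * v - w * v ^ 2) * (χ v * ((1 - γ * v)⁻¹) ^ (k + 2))))) v := by
      intro v hv
      have hn := hne v (hmem v hv)
      have d0 : HasDerivAt (fun v : ℝ => (v : ℂ)) 1 v := Complex.ofRealCLM.hasDerivAt
      have d1 : HasDerivAt (fun v : ℝ => cexp (α * v - w * v ^ 2))
          (cexp (α * v - w * v ^ 2) * (α - 2 * w * v)) v := by
        have := ((d0.const_mul α).sub ((d0.pow 2).const_mul w)).cexp
        convert! this using 1
        simp; ring
      have d2 : HasDerivAt χ (deriv χ v) v :=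
        (hχ.differentiable (by simp) v).hasDerivAt
      have d3 : HasDerivAt (fun v : ℝ => ((1 - γ * v : ℂ)⁻¹) ^ (k + 1))
          ((k + 1) * γ * ((1 - γ * v : ℂ)⁻¹) ^ (k + 2)) v := by
        have := (((d0.const_mul γ).const_sub 1).fun_inv hn).pow (k + 1)
        convert! this using 1
        simp; field_simp; ring
      convert! d1.mul (d2.mul d3) using 1
      have e : α - 2 * w * v = α * (1 - γ * v) := by rw [hγ]; field_simp
      rw [e]
      have e2 : ((1 - γ * v : ℂ)⁻¹) ^ k = (1 - γ * v) * ((1 - γ * v : ℂ)⁻¹) ^ (k + 1) := by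
        rw [pow_succ]; field_simp
      rw [e2]; simp only [Pi.mul_apply]; ring
    have hI := intervalIntegral.integral_eq_sub_of_hasDerivAt hder (by
      exact ((hcont χ hχ.continuous k).const_mul α).add
        ((hcont _ hχd.continuous (k + 1)).add ((hcont χ hχ.continuous (k + 2)).const_mul _)))
    have hz1 : χ κ = 0 := hχ0 _ (by rw [abs_of_pos hκ]; exact hr)
    have hz2 : χ (-κ) = 0 := hχ0 _ (by rw [abs_neg, abs_of_pos hκ]; exact hr)
    rw [intervalIntegral.integral_add ((hcont χ hχ.continuous k).const_mul α)
      ((hcont _ hχd.continuous (k + 1)).add ((hcont χ hχ.continuous (k + 2)).const_mul _)),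
      intervalIntegral.integral_add (hcont _ hχd.continuous (k + 1))
      ((hcont χ hχ.continuous (k + 2)).const_mul _), intervalIntegral.integral_const_mul,
      intervalIntegral.integral_const_mul, hz1, hz2] at hI
    simp only [zero_mul, mul_zero, sub_zero] at hI
    have hI' := eq_neg_of_add_eq_zero_left hI
    have hnorm := congrArg norm hI'
    rw [norm_mul, norm_neg] at hnorm
    set I0 := ∫ v in (-κ)..κ, cexp (α * v - w * v ^ 2) * (χ v * ((1 - γ * v)⁻¹) ^ k)
    set I1 := ∫ v in (-κ)..κ, cexp (α * v - w * v ^ 2) * (deriv χ v * ((1 - γ * v)⁻¹) ^ (k + 1))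
    set I2 := ∫ v in (-κ)..κ, cexp (α * v - w * v ^ 2) * (χ v * ((1 - γ * v)⁻¹) ^ (k + 2))
    have hfin : ‖α‖ * ‖I0‖ ≤ (C1 + (k + 1) / (2 * κ) * C2) * (‖α‖ ^ N)⁻¹ := by
      rw [hnorm]
      refine (norm_add_le _ _).trans ?_
      rw [norm_mul, norm_mul]
      have : ‖(k + 1 : ℂ)‖ = k + 1 := by
        have := Complex.norm_natCast (k + 1); push_cast at this; exact this
      rw [this]
      calc ‖I1‖ + (k + 1) * ‖γ‖ * ‖I2‖ ≤ C1 * (‖α‖ ^ N)⁻¹ +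
          (k + 1) * (1 / (2 * κ)) * (C2 * (‖α‖ ^ N)⁻¹) := by gcongr
        _ = _ := by ring
    calc ‖I0‖ = ‖α‖⁻¹ * (‖α‖ * ‖I0‖) := by field_simp
      _ ≤ ‖α‖⁻¹ * ((C1 + (k + 1) / (2 * κ) * C2) * (‖α‖ ^ N)⁻¹) := by gcongr
      _ = _ := by rw [pow_succ]; field_simp

/-! ### An `L¹` bound for one-dimensional Fourier transforms -/

/-- An `L¹` bound for a Fourier transform in terms of the `L²` norms of the function and its
derivative, from `F ≤ B/P + P F²/B` with `P = 1 + (As)²` and Plancherel. The parameters `A`, `B` are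
free and get optimized by the caller. -/
theorem integral_norm_fourier_le (n : SchwartzMap ℝ ℂ) (A B : ℝ) (hA : 0 < A) (hB : 0 < B) :
    ∫ s, ‖𝓕 n s‖ ≤ (B * (Real.pi / A) + ((∫ u, ‖n u‖ ^ 2) + A ^ 2 * ∫ u, ‖deriv n u‖ ^ 2) / B) := by
  set n' : SchwartzMap ℝ ℂ := SchwartzMap.derivCLM ℂ ℂ n with hn'
  have hderiv : ∀ u, n' u = deriv n u := fun u => by simp [hn']
  have hsq : ∀ g : SchwartzMap ℝ ℂ, Integrable (fun s => ‖g s‖ ^ 2) := by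
    intro g
    exact (g.memLp 2 volume).integrable_norm_pow (by norm_num)
  have hF' : ∀ s, ‖𝓕 n' s‖ = 2 * Real.pi * |s| * ‖𝓕 n s‖ := by
    intro s
    have h := Real.fourier_deriv n.integrable n.differentiable
      (by
        have := n'.integrable (μ := volume)
        exact this.congr (Filter.Eventually.of_forall hderiv))
    have h2 : 𝓕 n' s = 𝓕 (deriv n) s := by
      rw [SchwartzMap.fourier_coe]
      congr 1
    rw [h2, h, SchwartzMap.fourier_coe]
    simp [abs_of_pos Real.pi_pos]
  have hpt : ∀ s, ‖𝓕 n s‖ ≤ B * (1 + (A * s) ^ 2)⁻¹ + (‖𝓕 n s‖ ^ 2 + A ^ 2 * ‖𝓕 n' s‖ ^ 2) / B := by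
    intro s
    rw [hF']
    set F := ‖𝓕 n s‖
    have hF0 : 0 ≤ F := norm_nonneg _
    have hpi : 1 ≤ (2 * Real.pi) ^ 2 := by nlinarith [Real.pi_gt_three]
    have e1 : (1 + (A * s) ^ 2) * F ^ 2 ≤ F ^ 2 + A ^ 2 * (2 * Real.pi * |s| * F) ^ 2 := by
      have : (2 * Real.pi * |s| * F) ^ 2 = (2 * Real.pi) ^ 2 * (s ^ 2 * F ^ 2) := by
        rw [mul_pow, mul_pow, sq_abs]; ring
      rw [this]
      have : A ^ 2 * (s ^ 2 * F ^ 2) ≤ A ^ 2 * ((2 * Real.pi) ^ 2 * (s ^ 2 * F ^ 2)) := by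
        exact mul_le_mul_of_nonneg_left (le_mul_of_one_le_left (by positivity) hpi) (by positivity)
      nlinarith
    have hP : 0 < 1 + (A * s) ^ 2 := by positivity
    set P := 1 + (A * s) ^ 2
    have e2 : F ≤ B * P⁻¹ + P * F ^ 2 / B := by
      have h3 : B * P⁻¹ + P * F ^ 2 / B - F = ((B - P * F) ^ 2 + B * (P * F)) / (P * B) := by
        field_simp; ring
      have : 0 ≤ B * P⁻¹ + P * F ^ 2 / B - F := by rw [h3]; positivity
      linarith
    refine e2.trans ?_
    gcongr
  have hInt1 : Integrable (fun s : ℝ => (1 + (A * s) ^ 2)⁻¹) :=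
    integrable_inv_one_add_sq.comp_mul_left' hA.ne'
  have hI1 : ∫ s : ℝ, (1 + (A * s) ^ 2)⁻¹ = Real.pi / A := by
    rw [Measure.integral_comp_mul_left (fun x : ℝ => (1 + x ^ 2)⁻¹) A, integral_univ_inv_one_add_sq,
      abs_of_pos (inv_pos.2 hA)]
    simp [div_eq_inv_mul]
  have hInt2 : Integrable (fun s => (‖𝓕 n s‖ ^ 2 + A ^ 2 * ‖𝓕 n' s‖ ^ 2) / B) :=
    ((hsq (𝓕 n)).add ((hsq (𝓕 n')).const_mul _)).div_const _
  calc ∫ s, ‖𝓕 n s‖ ≤ ∫ s, (B * (1 + (A * s) ^ 2)⁻¹ + (‖𝓕 n s‖ ^ 2 + A ^ 2 * ‖𝓕 n' s‖ ^ 2) / B) :=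
        integral_mono (𝓕 n).integrable.norm ((hInt1.const_mul B).add hInt2) hpt
    _ = _ := by
        rw [integral_add (hInt1.const_mul B) hInt2, integral_const_mul, hI1, integral_div,
          integral_add (hsq (𝓕 n)) ((hsq (𝓕 n')).const_mul _), integral_const_mul,
          SchwartzMap.integral_norm_sq_fourier, SchwartzMap.integral_norm_sq_fourier]
        simp only [hderiv]

/-! ### The radial profile and its Fourier transform -/

/-- The function `u ↦ e^{bu} e^{i(T√u - σu)} χ(√u - L)`. For `σ = 0` and `u = |ξ|²` this is `e^{b|ξ|²}`
times the half-wave multiplier `e^{iT|ξ|} χ(|ξ| - L)`; the parameter `σ` allows for the removal of a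
linear phase. For `u ≤ 0` the square root is `0`, and the function vanishes as soon as `χ(-L) = 0`. -/
noncomputable def radSym (χ : ℝ → ℝ) (L T b σ u : ℝ) : ℂ :=
  cexp (((b * u : ℝ) : ℂ) + I * ((T * √u - σ * u : ℝ) : ℂ)) * ((χ (√u - L) : ℝ) : ℂ)

section radSym
variable {χ : ℝ → ℝ} {r κ L : ℝ}

theorem radSym_eventually_zero (hχ0 : ∀ v, r < |v| → χ v = 0) (T b σ : ℝ) {u : ℝ}
    (hu : r < |√u - L|) : radSym χ L T b σ =ᶠ[nhds u] fun _ => 0 := by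
  have hc : Continuous fun u : ℝ => |√u - L| := by fun_prop
  filter_upwards [(isOpen_lt continuous_const hc).mem_nhds hu] with x hx
  simp [radSym, hχ0 _ hx]

theorem radSym_contDiff (hχ : ContDiff ℝ (⊤ : ℕ∞) χ) (hχ0 : ∀ v, r < |v| → χ v = 0)
    (hrL : r < L) (T b σ : ℝ) : ContDiff ℝ (⊤ : ℕ∞) (radSym χ L T b σ) := by
  rw [contDiff_iff_contDiffAt]
  intro u
  rcases le_or_gt u 0 with hu | hu
  · refine (contDiffAt_const (c := (0 : ℂ))).congr_of_eventuallyEq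
      (radSym_eventually_zero hχ0 T b σ ?_)
    rw [Real.sqrt_eq_zero_of_nonpos hu, zero_sub, abs_neg]
    exact hrL.trans_le (le_abs_self L)
  · have hs : ContDiffAt ℝ (⊤ : ℕ∞) (fun u : ℝ => √u) u := Real.contDiffAt_sqrt hu.ne'
    unfold radSym
    refine ContDiffAt.mul (ContDiffAt.cexp (ContDiffAt.add ?_ (contDiffAt_const.mul ?_))) ?_
    · exact Complex.ofRealCLM.contDiff.contDiffAt.comp u (contDiffAt_const.mul contDiffAt_id)
    · exact Complex.ofRealCLM.contDiff.contDiffAt.comp u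
        ((contDiffAt_const.mul hs).sub (contDiffAt_const.mul contDiffAt_id))
    · exact Complex.ofRealCLM.contDiff.contDiffAt.comp u
        (hχ.contDiffAt.comp u (hs.sub contDiffAt_const))

theorem radSym_zero_of_notMem (hχ0 : ∀ v, r < |v| → χ v = 0) (hrκ : r < κ) (hκL : κ < L)
    (T b σ : ℝ) {u : ℝ} (hu : u ∉ Set.Icc ((L - κ) ^ 2) ((L + κ) ^ 2)) :
    radSym χ L T b σ u = 0 ∧ deriv (radSym χ L T b σ) u = 0 := by
  rcases lt_or_ge r |√u - L| with h | h
  · have := radSym_eventually_zero hχ0 T b σ h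
    exact ⟨this.eq_of_nhds, by rw [this.deriv_eq]; simp⟩
  · exfalso; apply hu
    have h' := abs_le.1 h
    have hs : 0 < √u := by linarith
    have hu0 : 0 < u := Real.sqrt_pos.1 hs
    constructor
    · rw [← Real.sq_sqrt hu0.le]; gcongr; linarith
    · rw [← Real.sq_sqrt hu0.le]; gcongr; linarith

theorem radSym_hasCompactSupport (hχ0 : ∀ v, r < |v| → χ v = 0) (hrκ : r < κ) (hκL : κ < L)
    (T b σ : ℝ) : HasCompactSupport (radSym χ L T b σ) :=
  HasCompactSupport.intro isCompact_Icc
    (fun _ hu => (radSym_zero_of_notMem hχ0 hrκ hκL T b σ hu).1)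

theorem integral_norm_sq_le_of_supp {g : ℝ → ℂ} {M : ℝ} (hκ : 0 ≤ κ) (hL : 0 ≤ L)
    (hg : ∀ u, u ∉ Set.Icc ((L - κ) ^ 2) ((L + κ) ^ 2) → g u = 0)
    (hM : ∀ u ∈ Set.Icc ((L - κ) ^ 2) ((L + κ) ^ 2), ‖g u‖ ≤ M) :
    ∫ u, ‖g u‖ ^ 2 ≤ M ^ 2 * (4 * L * κ) := by
  rw [← setIntegral_eq_integral_of_forall_compl_eq_zero
    (s := Set.Icc ((L - κ) ^ 2) ((L + κ) ^ 2)) (fun u hu => by simp [hg u hu])]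
  have := norm_setIntegral_le_of_norm_le_const (μ := volume)
    (s := Set.Icc ((L - κ) ^ 2) ((L + κ) ^ 2)) (f := fun u => ‖g u‖ ^ 2) (C := M ^ 2)
    (by simp) (fun u hu => by
      rw [norm_pow, norm_norm]; gcongr; exact hM u hu)
  refine (le_abs_self _).trans (this.trans (le_of_eq ?_))
  rw [Real.volume_real_Icc_of_le (by nlinarith [mul_nonneg hκ hL])]
  ring

theorem radSym_exp_norm {b : ℝ} (T σ u : ℝ) :
    ‖cexp (((b * u : ℝ) : ℂ) + I * ((T * √u - σ * u : ℝ) : ℂ))‖ = Real.exp (b * u) := by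
  rw [Complex.norm_exp]
  congr 1
  rw [Complex.add_re, Complex.ofReal_re, Complex.re_mul_ofReal]; simp

theorem radSym_exp_le {b u : ℝ} (hκ : 0 ≤ κ) (hκL : κ < L) (hb : 0 ≤ b) (hbL : b * L ^ 2 ≤ 4)
    (hu : u ∈ Set.Icc ((L - κ) ^ 2) ((L + κ) ^ 2)) : Real.exp (b * u) ≤ Real.exp 16 := by
  apply Real.exp_le_exp.2
  have : u ≤ 4 * L ^ 2 := hu.2.trans (by nlinarith)
  nlinarith [mul_le_mul_of_nonneg_left this hb]

/-- With `σ = T/(2L)` the derivative of the phase `T√u - σu` vanishes at `u = L²`, and hence is of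
size `|T|/L²` on the whole support. -/
theorem radSym_deriv_le {S S' b T : ℝ} (hχ : ContDiff ℝ (⊤ : ℕ∞) χ) (hκ : 0 ≤ κ)
    (hL : κ + 1 ≤ L) (hS : ∀ v, |χ v| ≤ S) (hS' : ∀ v, |deriv χ v| ≤ S')
    (hb : 0 ≤ b) (hbL : b * L ^ 2 ≤ 4)
    {u : ℝ} (hu : u ∈ Set.Icc ((L - κ) ^ 2) ((L + κ) ^ 2)) :
    ‖deriv (radSym χ L T b (T / (2 * L))) u‖ ≤
      Real.exp 16 * ((4 / L + |T| * (κ * (κ + 1)) / (2 * L ^ 2)) * S + (κ + 1) / (2 * L) * S') := by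
  have hL0 : 0 < L := by linarith
  have hu0 : 0 < u := lt_of_lt_of_le (by nlinarith) hu.1
  have hlow : L - κ ≤ √u := Real.le_sqrt_of_sq_le hu.1
  have hhigh : √u ≤ L + κ := by
    rw [Real.sqrt_le_left (by linarith)]; exact hu.2
  have hs : 0 < √u := Real.sqrt_pos.2 hu0
  have hs1 : L / (κ + 1) ≤ √u := by
    refine le_trans ?_ hlow
    rw [div_le_iff₀ (by linarith)]; nlinarith
  have hsinv : (√u)⁻¹ ≤ (κ + 1) / L := by
    rw [inv_le_comm₀ hs (by positivity), inv_div]; exact hs1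
  have d1 := Real.hasDerivAt_sqrt hu0.ne'
  have d2 : HasDerivAt (fun u : ℝ => (((b * u : ℝ) : ℂ) + I * ((T * √u - T / (2 * L) * u : ℝ) : ℂ)))
      ((b : ℂ) + I * ((T * (1 / (2 * √u)) - T / (2 * L) : ℝ) : ℂ)) u := by
    have e1 : HasDerivAt (fun u : ℝ => b * u) b u := by
      simpa using (hasDerivAt_id u).const_mul b
    have e2 : HasDerivAt (fun u : ℝ => T * √u - T / (2 * L) * u)
        (T * (1 / (2 * √u)) - T / (2 * L)) u := by
      simpa using! (d1.const_mul T).sub ((hasDerivAt_id u).const_mul (T / (2 * L)))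
    exact e1.ofReal_comp.add (e2.ofReal_comp.const_mul I)
  have d3 : HasDerivAt (fun u : ℝ => ((χ (√u - L) : ℝ) : ℂ))
      ((deriv χ (√u - L) * (1 / (2 * √u)) : ℝ) : ℂ) u := by
    have e : HasDerivAt χ (deriv χ (√u - L)) (√u - L) :=
      (hχ.differentiable (by simp) _).hasDerivAt
    exact (HasDerivAt.comp u e (d1.sub_const L)).ofReal_comp
  have d := d2.cexp.mul d3
  have hd : deriv (radSym χ L T b (T / (2 * L))) u = _ := HasDerivAt.deriv d
  rw [hd]
  have hE := radSym_exp_le hκ (by linarith) hb hbL hu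
  rw [← radSym_exp_norm T (T / (2 * L)) u] at hE
  have hb4 : b ≤ 4 / L := by
    rw [le_div_iff₀ hL0]
    nlinarith [mul_nonneg hb hL0.le]
  have hphase : |T * (1 / (2 * √u)) - T / (2 * L)| ≤ |T| * (κ * (κ + 1)) / (2 * L ^ 2) := by
    have : T * (1 / (2 * √u)) - T / (2 * L) = T * ((L - √u) * (√u)⁻¹) / (2 * L) := by
      field_simp
    rw [this, abs_div, abs_mul, abs_mul, abs_of_pos (show 0 < 2 * L by linarith),
      abs_of_pos (inv_pos.2 hs)]
    have h1 : |L - √u| ≤ κ := abs_le.2 ⟨by linarith, by linarith⟩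
    calc |T| * (|L - √u| * (√u)⁻¹) / (2 * L) ≤ |T| * (κ * ((κ + 1) / L)) / (2 * L) := by gcongr
      _ = _ := by field_simp
  have hS0 : 0 ≤ S := (abs_nonneg _).trans (hS 0)
  have hS'0 : 0 ≤ S' := (abs_nonneg _).trans (hS' 0)
  set X := cexp (((b * u : ℝ) : ℂ) + I * ((T * √u - T / (2 * L) * u : ℝ) : ℂ))
  calc _ ≤ ‖X‖ * (‖(b : ℂ) + I * ((T * (1 / (2 * √u)) - T / (2 * L) : ℝ) : ℂ)‖ * ‖((χ (√u - L) : ℝ) : ℂ)‖)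
        + ‖X‖ * ‖((deriv χ (√u - L) * (1 / (2 * √u)) : ℝ) : ℂ)‖ := by
        refine (norm_add_le _ _).trans (le_of_eq ?_)
        rw [norm_mul, norm_mul, norm_mul, mul_assoc]
    _ ≤ Real.exp 16 * ((4 / L + |T| * (κ * (κ + 1)) / (2 * L ^ 2)) * S)
        + Real.exp 16 * ((κ + 1) / (2 * L) * S') := by
        rw [Complex.norm_real, Complex.norm_real, Real.norm_eq_abs, Real.norm_eq_abs, abs_mul,
          mul_comm |deriv χ _|]
        gcongr
        · refine (norm_add_le _ _).trans (add_le_add ?_ ?_)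
          · rw [Complex.norm_real, Real.norm_eq_abs, abs_of_nonneg hb]; exact hb4
          · rw [norm_mul, Complex.norm_I, one_mul, Complex.norm_real]; exact hphase
        · exact hS _
        · rw [abs_of_pos (by positivity), one_div, mul_inv]
          calc 2⁻¹ * (√u)⁻¹ ≤ 2⁻¹ * ((κ + 1) / L) := by gcongr
            _ = _ := by field_simp
        · exact hS' _
    _ = _ := by ring
end radSym

section kernel
variable {χ : ℝ → ℝ} {r κ L : ℝ}

theorem radSym_fourier_shift (χ : ℝ → ℝ) (L T b σ s : ℝ) :
    𝓕 (radSym χ L T b σ) s = 𝓕 (radSym χ L T b 0) (s + σ / (2 * Real.pi)) := by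
  rw [Real.fourier_eq', Real.fourier_eq']
  congr 1
  ext u
  simp only [radSym, smul_eq_mul, ← mul_assoc, ← Complex.exp_add]
  congr 2
  have : (Real.pi : ℂ) ≠ 0 := by exact_mod_cast Real.pi_ne_zero
  simp
  field_simp
  ring

/-- The `L¹` norm of the Fourier transform does not see the linear phase, so it may be computed for
`σ = T/(2L)`; the parameters of `integral_norm_fourier_le` are `A = L/τ` and `B = L/√τ`. -/
theorem radSym_fourier_L1 (hχ : ContDiff ℝ (⊤ : ℕ∞) χ) (hχ0 : ∀ v, r < |v| → χ v = 0)
    (hrκ : r < κ) (hκ : 0 < κ) {c : ℝ} (hc : 0 < c) :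
    ∃ C, 0 ≤ C ∧ ∀ L T b : ℝ, κ + 1 ≤ L → c * L ≤ |T| → 0 ≤ b → b * L ^ 2 ≤ 4 →
      ∫ s, ‖𝓕 (radSym χ L T b 0) s‖ ≤ C * √(|T| / L) := by
  have hcs : HasCompactSupport χ := HasCompactSupport.intro (K := Set.Icc (-r) r) isCompact_Icc
    (fun v hv => hχ0 v (by by_contra h; exact hv (abs_le.1 (not_lt.1 h))))
  obtain ⟨S, hS⟩ := hcs.exists_bound_of_continuous hχ.continuous
  obtain ⟨S', hS'⟩ := hcs.deriv.exists_bound_of_continuous (hχ.continuous_deriv (by simp))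
  have hS0 : 0 ≤ S := (norm_nonneg _).trans (hS 0)
  have hS'0 : 0 ≤ S' := (norm_nonneg _).trans (hS' 0)
  set D : ℝ := Real.exp 16 * ((4 / c + κ * (κ + 1) / 2) * S + (κ + 1) / (2 * c) * S') with hD
  have hD0 : 0 ≤ D := by positivity
  refine ⟨Real.pi + 4 * κ * ((Real.exp 16 * S) ^ 2 + D ^ 2), by positivity, ?_⟩
  intro L T b hL hT hb hbL
  have hL0 : 0 < L := by linarith
  set τ := |T| / L with hτ
  have hτc : c ≤ τ := by rw [hτ, le_div_iff₀ hL0]; exact hT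
  have hτ0 : 0 < τ := hc.trans_le hτc
  set σ := T / (2 * L) with hσ
  set n : SchwartzMap ℝ ℂ := (radSym_hasCompactSupport (L := L) hχ0 hrκ (by linarith) T b σ).toSchwartzMap
    (radSym_contDiff hχ hχ0 (by linarith) T b σ) with hn
  have hnc : (n : ℝ → ℂ) = radSym χ L T b σ := rfl
  have h1 : ∫ s, ‖𝓕 (radSym χ L T b 0) s‖ = ∫ s, ‖𝓕 n s‖ := by
    rw [← integral_add_right_eq_self (fun s => ‖𝓕 (radSym χ L T b 0) s‖) (σ / (2 * Real.pi))]
    congr 1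
    ext s
    rw [← radSym_fourier_shift, SchwartzMap.fourier_coe, hnc]
  rw [h1]
  refine (integral_norm_fourier_le n (L / τ) (L / √τ) (by positivity) (by positivity)).trans ?_
  rw [hnc]
  have b1 : ∫ u, ‖radSym χ L T b σ u‖ ^ 2 ≤ (Real.exp 16 * S) ^ 2 * (4 * L * κ) := by
    refine integral_norm_sq_le_of_supp hκ.le hL0.le
      (fun u hu => (radSym_zero_of_notMem hχ0 hrκ (by linarith) T b σ hu).1) ?_
    intro u hu
    rw [radSym, norm_mul, radSym_exp_norm, Complex.norm_real]
    gcongr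
    · exact Real.exp_le_exp.1 (radSym_exp_le hκ.le (by linarith) hb hbL hu)
    · exact hS _
  have b2 : ∫ u, ‖deriv (radSym χ L T b σ) u‖ ^ 2 ≤ (D * (τ / L)) ^ 2 * (4 * L * κ) := by
    refine integral_norm_sq_le_of_supp hκ.le hL0.le
      (fun u hu => (radSym_zero_of_notMem hχ0 hrκ (by linarith) T b σ hu).2) ?_
    intro u hu
    refine (radSym_deriv_le hχ hκ.le hL hS hS' hb hbL hu).trans ?_
    have h1τ : 1 ≤ τ / c := by rwa [one_le_div hc]
    have hTL : |T| = τ * L := by rw [hτ]; field_simp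
    calc _ = Real.exp 16 * ((4 / L * 1 + τ * (κ * (κ + 1)) / (2 * L)) * S + (κ + 1) / (2 * L) * 1 * S') := by
          rw [hTL]; field_simp
      _ ≤ Real.exp 16 * ((4 / L * (τ / c) + τ * (κ * (κ + 1)) / (2 * L)) * S
          + (κ + 1) / (2 * L) * (τ / c) * S') := by gcongr
      _ = D * (τ / L) := by rw [hD]; field_simp
  have hsq : √τ * √τ = τ := Real.mul_self_sqrt hτ0.le
  have hs0 : 0 < √τ := Real.sqrt_pos.2 hτ0
  calc _ ≤ L / √τ * (Real.pi / (L / τ)) + ((Real.exp 16 * S) ^ 2 * (4 * L * κ)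
        + (L / τ) ^ 2 * ((D * (τ / L)) ^ 2 * (4 * L * κ))) / (L / √τ) := by gcongr
    _ = Real.pi * (τ / √τ) + 4 * κ * ((Real.exp 16 * S) ^ 2 + D ^ 2) * √τ := by field_simp
    _ = _ := by
      have : τ / √τ = √τ := by rw [div_eq_iff hs0.ne', hsq]
      rw [this]; ring

/-- The substitution `√u = L + v` in the Fourier integral: with `w = 2πis - b`, the exponent becomes
`(iT - 2wL)v - wv²` up to a constant. -/
theorem radSym_fourier_eq (hχ0 : ∀ v, r < |v| → χ v = 0)
    (hrκ : r < κ) (hκ : 0 < κ) (hL : κ < L) (T b s : ℝ) :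
    𝓕 (radSym χ L T b 0) s = cexp (I * T * L - (2 * Real.pi * s * I - b) * L ^ 2) *
      ∫ v in (-κ)..κ, cexp ((I * T - 2 * (2 * Real.pi * s * I - b) * L) * v
        - (2 * Real.pi * s * I - b) * v ^ 2) * (2 * (L + v) * χ v) := by
  set w : ℂ := 2 * Real.pi * s * I - b with hw
  set H : ℝ → ℂ := fun y => cexp (I * T * y - w * y ^ 2) * (2 * y * χ (y - L)) with hH
  have h1 : 𝓕 (radSym χ L T b 0) s = ∫ y in Set.Ioi (0 : ℝ), H y := by
    rw [Real.fourier_eq']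
    have hz : ∀ u ∉ Set.Ioi (0 : ℝ), cexp (((-2 * Real.pi * inner ℝ u s : ℝ) : ℂ) * I) • radSym χ L T b 0 u = 0 := by
      intro u hu
      have hu' : u ≤ 0 := not_lt.1 hu
      rw [(radSym_zero_of_notMem hχ0 hrκ hL T b 0 (u := u) ?_).1, smul_zero]
      intro h
      have := h.1
      nlinarith
    rw [← setIntegral_eq_integral_of_forall_compl_eq_zero hz,
      ← integral_comp_rpow_Ioi _ (two_ne_zero : (2 : ℝ) ≠ 0)]
    refine setIntegral_congr_fun measurableSet_Ioi ?_
    intro y hy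
    have hy' : (0 : ℝ) < y := hy
    simp only [hH, radSym]
    rw [Real.rpow_two, Real.sqrt_sq hy'.le]
    norm_num
    have e : cexp (I * T * y - w * y ^ 2) = cexp (-(2 * Real.pi * (s * (y : ℂ) ^ 2) * I)) *
        cexp (b * (y : ℂ) ^ 2 + I * (T * y)) := by
      rw [← Complex.exp_add]; congr 1; rw [hw]; ring
    rw [e]
    ring
  have h2 : ∫ y in Set.Ioi (0 : ℝ), H y = ∫ y, H y := by
    refine setIntegral_eq_integral_of_forall_compl_eq_zero ?_
    intro y hy
    have hy' : y ≤ 0 := not_lt.1 hy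
    simp only [hH]
    rw [hχ0 (y - L) (by rw [abs_of_neg (by linarith)]; linarith)]
    simp
  rw [h1, h2, ← integral_add_right_eq_self H L, intervalIntegral.integral_of_le (by linarith),
    ← integral_const_mul]
  rw [← setIntegral_eq_integral_of_forall_compl_eq_zero (s := Set.Ioc (-κ) κ)]
  · refine setIntegral_congr_fun measurableSet_Ioc ?_
    intro v hv
    symm
    simp only [hH]
    rw [← mul_assoc, ← Complex.exp_add, add_sub_cancel_right]
    push_cast
    congr 1
    · congr 1; ring
    · ring
  · intro v hv
    simp only [hH, add_sub_cancel_right]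
    rw [hχ0 v]
    · simp
    · by_contra h
      have := abs_le.1 (not_lt.1 h)
      exact hv ⟨by linarith, by linarith⟩

/-- Rapid decay in `T` of the Fourier transform at frequencies `|s| ≲ |T|/L`, where the phase has no
stationary point in the support. -/
theorem radSym_fourier_small (hχ : ContDiff ℝ (⊤ : ℕ∞) χ) (hχ0 : ∀ v, r < |v| → χ v = 0)
    (hrκ : r < κ) (hκ : 0 < κ) (N : ℕ) :
    ∃ C, 0 ≤ C ∧ ∀ L T b s : ℝ, κ + 1 ≤ L → T ≠ 0 → 0 ≤ b → b * L ^ 2 ≤ 4 → 16 * (b * L) ≤ |T| →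
      32 * Real.pi * |s| * L ≤ |T| →
      ‖𝓕 (radSym χ L T b 0) s‖ ≤ C * L * (|T| ^ N)⁻¹ := by
  have hχc : ContDiff ℝ (⊤ : ℕ∞) (fun v => ((χ v : ℝ) : ℂ)) := Complex.ofRealCLM.contDiff.comp hχ
  have hχv : ContDiff ℝ (⊤ : ℕ∞) (fun v : ℝ => (v : ℂ) * ((χ v : ℝ) : ℂ)) :=
    Complex.ofRealCLM.contDiff.mul hχc
  obtain ⟨C1, hC1, h1⟩ := nonstationary_phase κ (Real.exp 12) hκ (by positivity) N _ hχc
    ⟨r, hrκ, fun v hv => by simp [hχ0 v hv]⟩ 0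
  obtain ⟨C2, hC2, h2⟩ := nonstationary_phase κ (Real.exp 12) hκ (by positivity) N _ hχv
    ⟨r, hrκ, fun v hv => by simp [hχ0 v hv]⟩ 0
  refine ⟨Real.exp 4 * (2 * (C1 + C2)) * 2 ^ N, by positivity, ?_⟩
  intro L T b s hL hT hb hbL hbT hsT
  have hL0 : 0 < L := by linarith
  have hL1 : 1 ≤ L := by linarith
  have hT0 : 0 < |T| := abs_pos.2 hT
  rw [radSym_fourier_eq hχ0 hrκ hκ (by linarith)]
  set w : ℂ := 2 * Real.pi * s * I - b with hw
  set α : ℂ := I * T - 2 * w * L with hα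
  have hwre : w.re = -b := by simp [hw]
  have hwim : w.im = 2 * Real.pi * s := by simp [hw]
  have hαim : α.im = T - 4 * Real.pi * s * L := by
    rw [hα, Complex.sub_im, Complex.im_mul_ofReal, Complex.im_mul_ofReal]
    have : (2 * w).im = 2 * w.im := by simp
    rw [this, hwim, Complex.I_im]; ring
  have hαre : α.re = 2 * b * L := by simp [hα, hwre]
  have hpi := Real.pi_pos
  have hαn : |T| / 2 ≤ ‖α‖ := by
    refine le_trans ?_ (Complex.abs_im_le_norm α)
    rw [hαim]
    have h3 := abs_sub_abs_le_abs_sub T (4 * Real.pi * s * L)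
    have h4 : |4 * Real.pi * s * L| = 4 * Real.pi * |s| * L := by
      rw [abs_mul, abs_mul, abs_of_pos hL0, abs_of_pos (by positivity : (0:ℝ) < 4 * Real.pi)]
    nlinarith
  have hα0 : α ≠ 0 := by
    intro h; rw [h, norm_zero] at hαn; linarith
  have hwn : ‖w‖ ≤ 2 * Real.pi * |s| + b := by
    refine (Complex.norm_le_abs_re_add_abs_im w).trans ?_
    rw [hwre, hwim, abs_neg, abs_of_nonneg hb, abs_mul, abs_of_pos (by positivity : (0:ℝ) < 2 * Real.pi)]
    linarith
  have hwα : 4 * ‖w‖ * κ ≤ ‖α‖ := by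
    calc 4 * ‖w‖ * κ ≤ 4 * (2 * Real.pi * |s| + b) * L := by gcongr; linarith
      _ ≤ |T| / 2 := by nlinarith
      _ ≤ _ := hαn
  have hR : ∀ v : ℝ, |v| ≤ κ → ‖cexp (α * v - w * v ^ 2)‖ ≤ Real.exp 12 := by
    intro v hv
    rw [Complex.norm_exp]
    apply Real.exp_le_exp.2
    have : (α * v - w * v ^ 2).re = 2 * b * L * v + b * v ^ 2 := by
      rw [← Complex.ofReal_pow, Complex.sub_re, Complex.re_mul_ofReal, Complex.re_mul_ofReal, hαre, hwre]; ring
    rw [this]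
    have hv1 : v ≤ L := (le_abs_self v).trans (by linarith)
    have hv2 : v ^ 2 ≤ L ^ 2 := by rw [← sq_abs v]; gcongr; linarith
    have e1 : b * L * v ≤ b * L * L := by gcongr
    have e2 : b * v ^ 2 ≤ b * L ^ 2 := by gcongr
    nlinarith
  have g1 := h1 α w hα0 hwα hR
  have g2 := h2 α w hα0 hwα hR
  simp only [pow_zero, mul_one] at g1 g2
  have hInt : ∫ v in (-κ)..κ, cexp (α * v - w * v ^ 2) * (2 * (L + v) * χ v) =
      2 * L * (∫ v in (-κ)..κ, cexp (α * v - w * v ^ 2) * χ v) +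
      2 * ∫ v in (-κ)..κ, cexp (α * v - w * v ^ 2) * (v * χ v) := by
    rw [← intervalIntegral.integral_const_mul, ← intervalIntegral.integral_const_mul,
      ← intervalIntegral.integral_add]
    · congr 1; ext v; ring
    · exact Continuous.intervalIntegrable (by have := hχc.continuous; fun_prop) _ _
    · exact Continuous.intervalIntegrable (by have := hχv.continuous; fun_prop) _ _
  rw [hInt, norm_mul, Complex.norm_exp]
  have hre : (I * T * L - w * L ^ 2).re ≤ 4 := by
    rw [← Complex.ofReal_pow, Complex.sub_re, Complex.re_mul_ofReal, Complex.re_mul_ofReal,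
      Complex.re_mul_ofReal, hwre]
    simp; linarith
  have hαN : (‖α‖ ^ N)⁻¹ ≤ 2 ^ N * (|T| ^ N)⁻¹ := by
    calc (‖α‖ ^ N)⁻¹ ≤ ((|T| / 2) ^ N)⁻¹ := by gcongr
      _ = _ := by rw [div_pow, inv_div]; rfl
  calc _ ≤ Real.exp 4 * (2 * L * (C1 * (‖α‖ ^ N)⁻¹) + 2 * (C2 * (‖α‖ ^ N)⁻¹)) := by
        gcongr
        refine (norm_add_le _ _).trans ?_
        rw [norm_mul, norm_mul, norm_mul, Complex.norm_real, Real.norm_eq_abs, abs_of_pos hL0]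
        simp only [Complex.norm_ofNat]
        gcongr
    _ ≤ Real.exp 4 * (2 * L * (C1 * (‖α‖ ^ N)⁻¹) + 2 * L * (C2 * (‖α‖ ^ N)⁻¹)) := by
        gcongr
        linarith
    _ = Real.exp 4 * (2 * (C1 + C2)) * L * (‖α‖ ^ N)⁻¹ := by ring
    _ ≤ Real.exp 4 * (2 * (C1 + C2)) * L * (2 ^ N * (|T| ^ N)⁻¹) := by gcongr
    _ = _ := by ring

end kernel

/-! ### The kernel of the half-wave propagator -/

section kernelBound
variable {χ : ℝ → ℝ} {r κ : ℝ} {d : ℕ}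

/-- The half-wave multiplier `e^{iT|ξ|} χ(|ξ| - L)`. -/
noncomputable def waveSym (d : ℕ) (χ : ℝ → ℝ) (L T : ℝ) (ξ : EuclideanSpace ℝ (Fin d)) : ℂ :=
  cexp (I * ((T * ‖ξ‖ : ℝ) : ℂ)) * ((χ (‖ξ‖ - L) : ℝ) : ℂ)

/-- The inverse Fourier transform of the complex Gaussian `e^{-(b - 2πis)|ξ|²}` is bounded by its
value at the origin. -/
theorem gauss_norm_le {b : ℝ} (hb : 0 < b) (s : ℝ) (x : EuclideanSpace ℝ (Fin d)) :
    ‖∫ ξ : EuclideanSpace ℝ (Fin d),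
      cexp (-((b : ℂ) - 2 * Real.pi * s * I) * ‖ξ‖ ^ 2 + 2 * Real.pi * I * ⟪x, ξ⟫)‖ ≤
      (Real.pi / ‖(b : ℂ) - 2 * Real.pi * s * I‖) ^ ((d : ℝ) / 2) := by
  set B : ℂ := (b : ℂ) - 2 * Real.pi * s * I with hB
  have hBre : B.re = b := by simp [hB]
  rw [GaussianFourier.integral_cexp_neg_mul_sq_norm_add (by rw [hBre]; exact hb), norm_mul,
    finrank_euclideanSpace_fin,
    show ((d : ℂ) / 2) = (((d : ℝ) / 2 : ℝ) : ℂ) by push_cast; rfl, Complex.norm_cpow_real,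
    norm_div, Complex.norm_real, Real.norm_of_nonneg Real.pi_pos.le]
  refine mul_le_of_le_one_right (by positivity) ?_
  rw [Complex.norm_exp]
  apply Real.exp_le_one_iff.2
  have : (2 * (Real.pi : ℂ) * I) ^ 2 * ‖x‖ ^ 2 / (4 * B)
      = ((-(Real.pi ^ 2 * ‖x‖ ^ 2) : ℝ) : ℂ) * B⁻¹ := by
    have hB0 : B ≠ 0 := by intro h; rw [h] at hBre; simp at hBre; linarith
    field_simp
    rw [Complex.I_sq]
    push_cast; ring
  rw [this, Complex.re_ofReal_mul, Complex.inv_re, hBre]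
  have : 0 ≤ b / Complex.normSq B := div_nonneg hb.le (Complex.normSq_nonneg _)
  have h2 : 0 ≤ Real.pi ^ 2 * ‖x‖ ^ 2 := by positivity
  nlinarith

/-- The half-wave kernel as a superposition of complex Gaussians, obtained from Fourier inversion for
the radial profile and Fubini. -/
theorem kernel_le_integral (hχ : ContDiff ℝ (⊤ : ℕ∞) χ) (hχ0 : ∀ v, r < |v| → χ v = 0)
    (hrκ : r < κ) {L : ℝ} (hL : κ < L) (T : ℝ) {b : ℝ} (hb : 0 < b)
    (x : EuclideanSpace ℝ (Fin d)) :
    ‖𝓕⁻ (waveSym d χ L T) x‖ ≤ ∫ s, ‖𝓕 (radSym χ L T b 0) s‖ *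
      (Real.pi / ‖(b : ℂ) - 2 * Real.pi * s * I‖) ^ ((d : ℝ) / 2) := by
  set m : SchwartzMap ℝ ℂ := (radSym_hasCompactSupport (L := L) hχ0 hrκ hL T b 0).toSchwartzMap
    (radSym_contDiff hχ hχ0 (by linarith) T b 0) with hm
  have hmc : (m : ℝ → ℂ) = radSym χ L T b 0 := rfl
  have hmF : 𝓕 (radSym χ L T b 0) = ((𝓕 m : SchwartzMap ℝ ℂ) : ℝ → ℂ) := by
    rw [SchwartzMap.fourier_coe, hmc]
  have hinv : ∀ u : ℝ, radSym χ L T b 0 u =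
      ∫ s : ℝ, cexp (2 * Real.pi * s * u * I) * (𝓕 m : SchwartzMap ℝ ℂ) s := by
    intro u
    have h1 : radSym χ L T b 0 u = (𝓕⁻ (𝓕 m) : SchwartzMap ℝ ℂ) u := by
      rw [FourierTransform.fourierInv_fourier_eq, hmc]
    rw [h1, SchwartzMap.fourierInv_coe, Real.fourierInv_eq']
    congr 1
    ext s
    simp only [smul_eq_mul]
    congr 2
    simp
    ring
  set Φ : EuclideanSpace ℝ (Fin d) → ℝ → ℂ := fun ξ s =>
    cexp (-((b : ℂ) - 2 * Real.pi * s * I) * ‖ξ‖ ^ 2 + 2 * Real.pi * I * ⟪x, ξ⟫) *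
      (𝓕 m : SchwartzMap ℝ ℂ) s with hΦ
  have hM : ∀ ξ, cexp (((2 * Real.pi * ⟪ξ, x⟫ : ℝ) : ℂ) * I) • waveSym d χ L T ξ
      = ∫ s, Φ ξ s := by
    intro ξ
    have h1 : waveSym d χ L T ξ = cexp (-(b : ℂ) * ‖ξ‖ ^ 2) * radSym χ L T b 0 (‖ξ‖ ^ 2) := by
      rw [waveSym, radSym, Real.sqrt_sq (norm_nonneg _), ← mul_assoc, ← Complex.exp_add]
      congr 2
      push_cast; ring
    rw [h1, hinv, smul_eq_mul, ← integral_const_mul, ← integral_const_mul]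
    congr 1
    ext s
    simp only [hΦ]
    rw [← mul_assoc, ← mul_assoc, ← Complex.exp_add, ← Complex.exp_add, real_inner_comm]
    congr 2
    push_cast; ring
  have hInt : Integrable (Function.uncurry Φ) (volume.prod volume) := by
    have hg : Integrable (fun z : EuclideanSpace ℝ (Fin d) × ℝ =>
        cexp (-(b : ℂ) * ‖z.1‖ ^ 2 + 2 * Real.pi * I * ⟪x, z.1⟫) * (𝓕 m : SchwartzMap ℝ ℂ) z.2)
        (volume.prod volume) :=
      (GaussianFourier.integrable_cexp_neg_mul_sq_norm_add (by simpa using hb) _ x).mul_prod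
        (𝓕 m : SchwartzMap ℝ ℂ).integrable
    refine hg.mono ?_ ?_
    · apply Continuous.aestronglyMeasurable
      have := (𝓕 m : SchwartzMap ℝ ℂ).continuous
      simp only [hΦ, Function.uncurry_def]
      fun_prop
    · refine Filter.Eventually.of_forall fun z => le_of_eq ?_
      simp only [hΦ, Function.uncurry_def]
      rw [norm_mul, norm_mul]
      congr 1
      rw [Complex.norm_exp, Complex.norm_exp]
      congr 1
      rw [← Complex.ofReal_pow]
      simp only [Complex.add_re, Complex.re_mul_ofReal]
      simp
  have hK : 𝓕⁻ (waveSym d χ L T) x = ∫ s, ∫ ξ, Φ ξ s := by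
    rw [Real.fourierInv_eq', ← integral_integral_swap hInt]
    congr 1
    ext ξ
    exact hM ξ
  rw [hK, hmF]
  refine norm_integral_le_of_norm_le ?_ (Filter.Eventually.of_forall fun s => ?_)
  · refine ((𝓕 m : SchwartzMap ℝ ℂ).integrable.norm).mul_bdd (c := (Real.pi / b) ^ ((d:ℝ)/2)) ?_ ?_
    · apply Measurable.aestronglyMeasurable
      fun_prop
    · refine Filter.Eventually.of_forall fun s => ?_
      rw [Real.norm_of_nonneg (by have := Real.pi_pos; positivity)]
      have := Real.pi_pos
      gcongr
      have h := Complex.re_le_norm ((b : ℂ) - 2 * Real.pi * s * I)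
      simpa using h
  · simp only [hΦ]
    rw [integral_mul_const, norm_mul, mul_comm]
    gcongr
    exact gauss_norm_le hb s x

/-- The pointwise kernel bound `|K| ≲ (|T|/L)^{-(d-1)/2}`: the integral over `s` is split at
`|s| = δ|T|/L`, with `δ = 1/(32π)` dictated by `radSym_fourier_small`. -/
theorem kernel_bound (d : ℕ) (hχ : ContDiff ℝ (⊤ : ℕ∞) χ) (hχ0 : ∀ v, r < |v| → χ v = 0)
    (hrκ : r < κ) (hκ : 1 ≤ κ) {c : ℝ} (hc : 0 < c) :
    ∃ C, 0 ≤ C ∧ ∀ L T : ℝ, κ + 1 ≤ L → c * L ≤ |T| → ∀ x : EuclideanSpace ℝ (Fin d),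
      ‖𝓕⁻ (waveSym d χ L T) x‖ ≤ C * (|T| / L) ^ (-(((d : ℝ) - 1) / 2)) := by
  have hκ0 : 0 < κ := by linarith
  have hpi := Real.pi_pos
  obtain ⟨C1, hC1, h1⟩ := radSym_fourier_L1 hχ hχ0 hrκ hκ0 hc
  obtain ⟨C2, hC2, h2⟩ := radSym_fourier_small hχ hχ0 hrκ hκ0 (d + 1)
  set β : ℝ := min 1 (c / 4) with hβ
  have hβ0 : 0 < β := lt_min one_pos (by positivity)
  have hβ1 : β ≤ 1 := min_le_left _ _
  have hβc : β ≤ c / 4 := min_le_right _ _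
  set δ : ℝ := 1 / (32 * Real.pi) with hδ
  have hδ0 : 0 < δ := by positivity
  refine ⟨2 * δ * C2 * (Real.pi / β) ^ ((d : ℝ) / 2) * c ^ (-(((d : ℝ) + 1) / 2)) +
    (2 * δ) ^ (-((d : ℝ) / 2)) * C1, by positivity, ?_⟩
  intro L T hL hT x
  have hL0 : 0 < L := by linarith
  have hL2 : 2 ≤ L := by linarith
  have hT0 : 0 < |T| := lt_of_lt_of_le (by positivity) hT
  set τ := |T| / L with hτ
  have hτc : c ≤ τ := by rw [hτ, le_div_iff₀ hL0]; exact hT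
  have hτ0 : 0 < τ := hc.trans_le hτc
  set b : ℝ := β / L ^ 2 with hb
  have hb0 : 0 < b := by positivity
  have hbL : b * L ^ 2 = β := by rw [hb]; field_simp
  have hbT : 16 * (b * L) ≤ |T| := by
    have e : b * L = β / L := by rw [hb]; field_simp
    have e2 : β / L ≤ c * L / 16 := by
      have e3 : (4 : ℝ) ≤ L * L := by nlinarith
      rw [div_le_iff₀ hL0]; nlinarith
    linarith
  set m : SchwartzMap ℝ ℂ := (radSym_hasCompactSupport (L := L) hχ0 hrκ (by linarith) T b 0).toSchwartzMap
    (radSym_contDiff hχ hχ0 (by linarith) T b 0) with hm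
  have hmF : 𝓕 (radSym χ L T b 0) = ((𝓕 m : SchwartzMap ℝ ℂ) : ℝ → ℂ) := by
    rw [SchwartzMap.fourier_coe]; rfl
  have hnb : ∀ s : ℝ, b ≤ ‖(b : ℂ) - 2 * Real.pi * s * I‖ := by
    intro s
    have h := Complex.re_le_norm ((b : ℂ) - 2 * Real.pi * s * I)
    simpa using h
  have hns : ∀ s : ℝ, 2 * Real.pi * |s| ≤ ‖(b : ℂ) - 2 * Real.pi * s * I‖ := by
    intro s
    have h := Complex.abs_im_le_norm ((b : ℂ) - 2 * Real.pi * s * I)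
    simpa [abs_mul, abs_of_pos hpi] using h
  set P : ℝ := C2 * L * (|T| ^ (d + 1))⁻¹ * (Real.pi / b) ^ ((d : ℝ) / 2) with hP
  have hP0 : 0 ≤ P := by positivity
  set Q : ℝ := (2 * δ * τ) ^ (-((d : ℝ) / 2)) with hQ
  have hInt1 : Integrable (Set.indicator (Set.Icc (-(δ * τ)) (δ * τ)) fun _ : ℝ => P) :=
    (integrable_indicator_iff measurableSet_Icc).2 (integrableOn_const (by simp))
  have hInt2 : Integrable fun s => Q * ‖𝓕 (radSym χ L T b 0) s‖ := by
    rw [hmF]; exact (𝓕 m : SchwartzMap ℝ ℂ).integrable.norm.const_mul _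
  have hpt : ∀ s, ‖𝓕 (radSym χ L T b 0) s‖ *
      (Real.pi / ‖(b : ℂ) - 2 * Real.pi * s * I‖) ^ ((d : ℝ) / 2) ≤
      Set.indicator (Set.Icc (-(δ * τ)) (δ * τ)) (fun _ : ℝ => P) s +
        Q * ‖𝓕 (radSym χ L T b 0) s‖ := by
    intro s
    by_cases hs : |s| ≤ δ * τ
    · rw [Set.indicator_of_mem (show s ∈ Set.Icc (-(δ * τ)) (δ * τ) from abs_le.1 hs)]
      have h3 : 32 * Real.pi * |s| * L ≤ |T| := by
        calc 32 * Real.pi * |s| * L ≤ 32 * Real.pi * (δ * τ) * L := by gcongr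
          _ = |T| := by rw [hδ, hτ]; field_simp
      have h4 := h2 L T b s hL (abs_pos.1 hT0) hb0.le (by rw [hbL]; linarith) hbT h3
      have h5 : (Real.pi / ‖(b : ℂ) - 2 * Real.pi * s * I‖) ^ ((d : ℝ) / 2) ≤ (Real.pi / b) ^ ((d : ℝ) / 2) := by
        gcongr
        exact hnb s
      refine le_trans (mul_le_mul h4 h5 (by positivity) (by positivity)) ?_
      rw [← hP]
      have : 0 ≤ Q * ‖𝓕 (radSym χ L T b 0) s‖ := by positivity
      linarith
    · push Not at hs
      rw [Set.indicator_of_notMem (fun h : s ∈ Set.Icc (-(δ * τ)) (δ * τ) => absurd (abs_le.2 h) (not_le.2 hs)),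
        zero_add, mul_comm]
      gcongr
      rw [hQ, Real.rpow_neg (by positivity), ← Real.inv_rpow (by positivity)]
      gcongr
      have h6 : 0 < |s| := lt_trans (by positivity) hs
      calc Real.pi / ‖(b : ℂ) - 2 * Real.pi * s * I‖ ≤ Real.pi / (2 * Real.pi * |s|) := by
            gcongr; exact hns s
        _ = (2 * |s|)⁻¹ := by field_simp
        _ ≤ (2 * δ * τ)⁻¹ := by rw [mul_assoc]; gcongr
  refine (kernel_le_integral hχ hχ0 hrκ (by linarith : κ < L) T hb0 x).trans ?_
  refine (integral_mono_of_nonneg (Filter.Eventually.of_forall fun s => by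
    have := hb0; positivity) (hInt1.add hInt2) (Filter.Eventually.of_forall hpt)).trans ?_
  simp only [Pi.add_apply]
  rw [integral_add hInt1 hInt2, integral_const_mul, integral_indicator measurableSet_Icc,
    setIntegral_const]
  have hvol : volume.real (Set.Icc (-(δ * τ)) (δ * τ)) = 2 * (δ * τ) := by
    rw [Measure.real, Real.volume_Icc, ENNReal.toReal_ofReal] <;> nlinarith [mul_pos hδ0 hτ0]
  rw [hvol, smul_eq_mul]
  have h7 := h1 L T b hL hT hb0.le (by rw [hbL]; linarith)
  have hTL : |T| = τ * L := by rw [hτ]; field_simp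
  have e1 : 2 * (δ * τ) * P ≤ 2 * δ * C2 * (Real.pi / β) ^ ((d : ℝ) / 2) *
      c ^ (-(((d : ℝ) + 1) / 2)) * τ ^ (-(((d : ℝ) - 1) / 2)) := by
    have e2 : (Real.pi / b) ^ ((d : ℝ) / 2) = (Real.pi / β) ^ ((d : ℝ) / 2) * L ^ d := by
      rw [show Real.pi / b = Real.pi / β * L ^ 2 by rw [hb]; field_simp,
        Real.mul_rpow (by positivity) (by positivity), ← Real.rpow_natCast_mul hL0.le,
        ← Real.rpow_natCast L d]
      congr 2
      push_cast; ring
    have e3 : 2 * (δ * τ) * P = 2 * δ * C2 * (Real.pi / β) ^ ((d : ℝ) / 2) * (τ ^ d)⁻¹ := by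
      rw [hP, e2, hTL, mul_pow]
      field_simp
      ring
    have e4 : (τ ^ d)⁻¹ = τ ^ (-(((d : ℝ) + 1) / 2)) * τ ^ (-(((d : ℝ) - 1) / 2)) := by
      rw [← Real.rpow_add hτ0, ← Real.rpow_natCast, ← Real.rpow_neg hτ0.le]
      congr 1; ring
    have e5 : τ ^ (-(((d : ℝ) + 1) / 2)) ≤ c ^ (-(((d : ℝ) + 1) / 2)) :=
      Real.rpow_le_rpow_of_nonpos hc hτc (by have : (0:ℝ) ≤ d := Nat.cast_nonneg d; linarith)
    rw [e3, e4, ← mul_assoc]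
    gcongr
  have e6 : Q * (C1 * √τ) = (2 * δ) ^ (-((d : ℝ) / 2)) * C1 * τ ^ (-(((d : ℝ) - 1) / 2)) := by
    rw [hQ, Real.mul_rpow (by positivity) hτ0.le, Real.sqrt_eq_rpow,
      show -(((d : ℝ) - 1) / 2) = -((d : ℝ) / 2) + 1 / 2 by ring, Real.rpow_add hτ0]
    ring
  have hQ0 : 0 ≤ Q := by positivity
  calc _ ≤ 2 * (δ * τ) * P + Q * (C1 * √τ) := by gcongr
    _ ≤ _ := by rw [e6, add_mul]; linarith
end kernelBound

/-! ### Interpolation -/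

section interpolation

theorem lintegral_rpow_Ioc {a Y : ℝ} (ha : 0 < a) (hY : 0 ≤ Y) :
    ∫⁻ s in Set.Ioc 0 Y, ENNReal.ofReal (s ^ (a - 1)) = ENNReal.ofReal (Y ^ a / a) := by
  have hi : IntervalIntegrable (fun s : ℝ => s ^ (a - 1)) volume 0 Y :=
    intervalIntegral.intervalIntegrable_rpow' (by linarith)
  rw [← ofReal_integral_eq_lintegral_ofReal ((intervalIntegrable_iff_integrableOn_Ioc_of_le hY).1 hi)
    ((ae_restrict_iff' measurableSet_Ioc).2 (Filter.Eventually.of_forall fun s hs =>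
      Real.rpow_nonneg hs.1.le _)),
    ← intervalIntegral.integral_of_le hY, integral_rpow (Or.inl (by linarith))]
  simp [Real.zero_rpow (ne_of_gt ha)]

/-- Real interpolation with a constant uniform in `p`. The hypothesis `H` is the truncation estimate:
if the part of `g` above height `α` has mass at most `m`, then on `{F ≥ 2Am}` the function `F` is
controlled in `L²` by the part of `g` below height `α`. It is used with `m = s/A` and
`α = (AB/s)^{p-1}`, and integrated against `s^{p-3} ds`. -/
theorem interpolation_aux {X : Type*} [MeasurableSpace X] {μ : Measure X} [SFinite μ]
    {F g : X → ℝ} (hF : Measurable F) (hg : Measurable g) (hF0 : ∀ x, 0 ≤ F x)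
    (hg0 : ∀ x, 0 ≤ g x) {p q A B : ℝ} (hpq : p.HolderConjugate q) (hp : 2 < p) (hA : 0 < A)
    (hB : 0 < B) (hgB : ∫⁻ x, ENNReal.ofReal (g x ^ q) ∂μ = ENNReal.ofReal B)
    (H : ∀ α > 0, ∀ m > 0, ∫⁻ x in {x | α < g x}, ENNReal.ofReal (g x) ∂μ ≤ ENNReal.ofReal m →
      ∫⁻ x in {x | 2 * (A * m) ≤ F x}, ENNReal.ofReal (F x ^ 2) ∂μ ≤
        4 * ∫⁻ x in {x | g x ≤ α}, ENNReal.ofReal (g x ^ 2) ∂μ) :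
    ∫⁻ x, ENNReal.ofReal (F x ^ p) ∂μ ≤ ENNReal.ofReal (2 ^ p * A ^ (p - 2) * B ^ (p - 1)) := by
  have hp1 : 0 < p - 1 := by linarith
  have hp2 : 0 < p - 2 := by linarith
  have hq : q = p / (p - 1) := hpq.conjugate_eq
  have hq1 : q - 1 = (p - 1)⁻¹ := by rw [hq]; field_simp; ring
  set W : ℝ → ℝ≥0∞ := fun s => ENNReal.ofReal (s ^ (p - 2 - 1)) with hW
  have hWm : Measurable W := by fun_prop
  set α : ℝ → ℝ := fun s => (A * B / s) ^ (p - 1) with hα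
  have hαm : Measurable α := by fun_prop
  -- layer cake for `F ^ p`
  have step1 : ∀ x, ENNReal.ofReal (F x ^ p) = ENNReal.ofReal (2 ^ (p - 2) * (p - 2)) *
      ∫⁻ s in Set.Ioi 0, W s * Set.indicator {x | 2 * s ≤ F x} (fun x => ENNReal.ofReal (F x ^ 2)) x := by
    intro x
    have e : ∀ s, W s * Set.indicator {x | 2 * s ≤ F x} (fun x => ENNReal.ofReal (F x ^ 2)) x
        = Set.indicator (Set.Iic (F x / 2)) W s * ENNReal.ofReal (F x ^ 2) := by
      intro s
      by_cases h : 2 * s ≤ F x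
      · rw [Set.indicator_of_mem (show x ∈ {x | 2 * s ≤ F x} from h),
          Set.indicator_of_mem (show s ∈ Set.Iic (F x / 2) from by simp; linarith)]
      · rw [Set.indicator_of_notMem (show x ∉ {x | 2 * s ≤ F x} from h),
          Set.indicator_of_notMem (show s ∉ Set.Iic (F x / 2) from by simp; linarith), mul_zero, zero_mul]
    simp_rw [e]
    rw [lintegral_mul_const _ (hWm.indicator measurableSet_Iic),
      setLIntegral_indicator measurableSet_Iic, Set.inter_comm, Set.Ioi_inter_Iic,
      lintegral_rpow_Ioc hp2 (by have := hF0 x; positivity), ← ENNReal.ofReal_mul (by have := hF0 x; positivity),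
      ← ENNReal.ofReal_mul (by positivity)]
    congr 1
    rcases (hF0 x).eq_or_lt with h | h
    · rw [← h, Real.zero_rpow (by linarith)]; simp
    · rw [Real.div_rpow h.le (by norm_num)]
      have : F x ^ p = F x ^ (p - 2) * F x ^ 2 := by
        rw [← Real.rpow_natCast, ← Real.rpow_add h]; congr 1; push_cast; ring
      rw [this]; field_simp
  -- the high part of `g` above the level `α s` has mass at most `s / A`
  have step2 : ∀ s > 0, ∫⁻ x in {x | 2 * s ≤ F x}, ENNReal.ofReal (F x ^ 2) ∂μ ≤
      4 * ∫⁻ x in {x | g x ≤ α s}, ENNReal.ofReal (g x ^ 2) ∂μ := by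
    intro s hs
    have hαs : 0 < α s := by simp only [hα]; positivity
    have h1 := H (α s) hαs (s / A) (by positivity) ?_
    · rwa [mul_div_cancel₀ _ hA.ne'] at h1
    · have e1 : α s ^ (1 - q) * B = s / A := by
        simp only [hα]
        rw [← Real.rpow_mul (by positivity), show (p - 1) * (1 - q) = -1 by
          rw [show 1 - q = -(p - 1)⁻¹ by linarith]; field_simp, Real.rpow_neg_one]
        field_simp
      rw [← e1, ENNReal.ofReal_mul (by positivity), ← hgB, ← lintegral_const_mul _ (by fun_prop)]
      refine le_trans (setLIntegral_mono (by fun_prop) (fun x hx => ?_)) (setLIntegral_le_lintegral _ _)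
      rw [← ENNReal.ofReal_mul (by positivity)]
      apply ENNReal.ofReal_le_ofReal
      have hgx : 0 < g x := hαs.trans hx
      have e2 : g x = g x ^ (1 - q) * g x ^ q := by
        rw [← Real.rpow_add hgx]; simp
      conv_lhs => rw [e2]
      gcongr ?_ * _
      refine Real.rpow_le_rpow_of_nonpos hαs (le_of_lt hx) ?_
      have : 0 < (p - 1)⁻¹ := by positivity
      linarith
  -- for fixed `x` the condition `g x ≤ α s` reads `s ≤ A * B * g x ^ (1 - q)`
  have step3 : ∀ x, ∫⁻ s in Set.Ioi 0, W s *
      Set.indicator {x | g x ≤ α s} (fun x => ENNReal.ofReal (g x ^ 2)) x =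
      ENNReal.ofReal ((A * B) ^ (p - 2) / (p - 2)) * ENNReal.ofReal (g x ^ q) := by
    intro x
    rcases (hg0 x).eq_or_lt with h | h
    · have : ∀ s, W s * Set.indicator {x | g x ≤ α s} (fun x => ENNReal.ofReal (g x ^ 2)) x = 0 := by
        intro s
        by_cases hs : g x ≤ α s
        · rw [Set.indicator_of_mem (show x ∈ {x | g x ≤ α s} from hs), ← h]; simp
        · rw [Set.indicator_of_notMem (show x ∉ {x | g x ≤ α s} from hs), mul_zero]
      simp_rw [this]
      rw [← h, Real.zero_rpow (by rw [hq]; positivity)]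
      simp
    · set Y : ℝ := A * B * g x ^ (1 - q) with hY
      have hY0 : 0 < Y := by positivity
      have e : ∀ s ∈ Set.Ioi (0:ℝ), W s * Set.indicator {x | g x ≤ α s} (fun x => ENNReal.ofReal (g x ^ 2)) x
          = Set.indicator (Set.Iic Y) W s * ENNReal.ofReal (g x ^ 2) := by
        intro s hs
        have hs0 : 0 < s := hs
        have key : g x ≤ α s ↔ s ≤ Y := by
          simp only [hα, hY]
          have e1 : g x = (g x ^ (q - 1)) ^ (p - 1) := by
            rw [← Real.rpow_mul h.le, hq1, inv_mul_cancel₀ hp1.ne', Real.rpow_one]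
          conv_lhs => rw [e1]
          rw [Real.rpow_le_rpow_iff (by positivity) (by positivity) hp1, le_div_iff₀ hs0,
            show 1 - q = -(q - 1) by ring, Real.rpow_neg h.le, ← div_eq_mul_inv,
            le_div_iff₀ (by positivity), mul_comm]
        by_cases hx : g x ≤ α s
        · rw [Set.indicator_of_mem (show x ∈ {x | g x ≤ α s} from hx),
            Set.indicator_of_mem (show s ∈ Set.Iic Y from key.1 hx)]
        · rw [Set.indicator_of_notMem (show x ∉ {x | g x ≤ α s} from hx),
            Set.indicator_of_notMem (show s ∉ Set.Iic Y from fun h' => hx (key.2 h')), mul_zero, zero_mul]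
      rw [setLIntegral_congr_fun measurableSet_Ioi e,
        lintegral_mul_const _ (hWm.indicator measurableSet_Iic),
        setLIntegral_indicator measurableSet_Iic, Set.inter_comm, Set.Ioi_inter_Iic,
        lintegral_rpow_Ioc hp2 hY0.le, ← ENNReal.ofReal_mul (by positivity),
        ← ENNReal.ofReal_mul (by positivity)]
      congr 1
      rw [hY, Real.mul_rpow (by positivity) (by positivity), ← Real.rpow_mul h.le]
      have : g x ^ q = g x ^ ((1 - q) * (p - 2)) * g x ^ 2 := by
        rw [← Real.rpow_natCast (g x) 2, ← Real.rpow_add h]; congr 1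
        rw [hq]; push_cast; field_simp; ring
      rw [this]; ring
  have m1 : Measurable (Function.uncurry fun (x : X) (s : ℝ) =>
      W s * Set.indicator {x | 2 * s ≤ F x} (fun x => ENNReal.ofReal (F x ^ 2)) x) := by
    have : (Function.uncurry fun (x : X) (s : ℝ) =>
      W s * Set.indicator {x | 2 * s ≤ F x} (fun x => ENNReal.ofReal (F x ^ 2)) x) =
      fun z : X × ℝ => W z.2 * Set.indicator {z : X × ℝ | 2 * z.2 ≤ F z.1} (fun z => ENNReal.ofReal (F z.1 ^ 2)) z := by
      ext z; simp [Function.uncurry, Set.indicator]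
    rw [this]
    refine (hWm.comp measurable_snd).mul (Measurable.indicator (by fun_prop) ?_)
    exact measurableSet_le (by fun_prop) (by fun_prop)
  have m2 : Measurable (Function.uncurry fun (x : X) (s : ℝ) =>
      W s * Set.indicator {x | g x ≤ α s} (fun x => ENNReal.ofReal (g x ^ 2)) x) := by
    have : (Function.uncurry fun (x : X) (s : ℝ) =>
      W s * Set.indicator {x | g x ≤ α s} (fun x => ENNReal.ofReal (g x ^ 2)) x) =
      fun z : X × ℝ => W z.2 * Set.indicator {z : X × ℝ | g z.1 ≤ α z.2} (fun z => ENNReal.ofReal (g z.1 ^ 2)) z := by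
      ext z; simp [Function.uncurry, Set.indicator]
    rw [this]
    refine (hWm.comp measurable_snd).mul (Measurable.indicator (by fun_prop) ?_)
    exact measurableSet_le (by fun_prop) (by fun_prop)
  have hsw : ∫⁻ x, (∫⁻ s in Set.Ioi 0, W s *
        Set.indicator {x | 2 * s ≤ F x} (fun x => ENNReal.ofReal (F x ^ 2)) x) ∂μ ≤
      4 * ∫⁻ x, (∫⁻ s in Set.Ioi 0, W s *
        Set.indicator {x | g x ≤ α s} (fun x => ENNReal.ofReal (g x ^ 2)) x) ∂μ := by
    rw [lintegral_lintegral_swap m1.aemeasurable, lintegral_lintegral_swap m2.aemeasurable,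
      ← lintegral_const_mul _ (by exact Measurable.lintegral_prod_left (μ := μ) m2)]
    refine setLIntegral_mono (by
      exact Measurable.const_mul (Measurable.lintegral_prod_left (μ := μ) m2) _) (fun s hs => ?_)
    rw [lintegral_const_mul _ (Measurable.indicator (by fun_prop) (measurableSet_le (by fun_prop) hF)),
      lintegral_const_mul _ (Measurable.indicator (by fun_prop) (measurableSet_le hg (by fun_prop))),
      lintegral_indicator (measurableSet_le (by fun_prop) hF),
      lintegral_indicator (measurableSet_le hg (by fun_prop)), mul_left_comm]
    gcongr
    exact step2 s hs
  simp_rw [step1]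
  rw [lintegral_const_mul _ (by exact Measurable.lintegral_prod_right (ν := volume.restrict _) m1)]
  refine (mul_le_mul_right hsw _).trans (le_of_eq ?_)
  simp_rw [step3]
  rw [lintegral_const_mul _ (by fun_prop), hgB, show (4 : ℝ≥0∞) = ENNReal.ofReal 4 by simp,
    ← ENNReal.ofReal_mul (by positivity), ← ENNReal.ofReal_mul (by positivity),
    ← ENNReal.ofReal_mul (by positivity)]
  congr 1
  rw [Real.mul_rpow hA.le hB.le, show p - 1 = (p - 2) + 1 by ring, Real.rpow_add hB, Real.rpow_one]
  have : (2 : ℝ) ^ p = 2 ^ (p - 2) * 4 := by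
    rw [show (4 : ℝ) = 2 ^ (2 : ℝ) by norm_num, ← Real.rpow_add two_pos]; congr 1; ring
  rw [this]; field_simp
end interpolation

/-! ### Convolution operators -/

section convolution
variable {d : ℕ}

/-- The convolution `φ * K`, written out as an integral. -/
noncomputable def convOp (φ K : EuclideanSpace ℝ (Fin d) → ℂ) (x : EuclideanSpace ℝ (Fin d)) : ℂ :=
  ∫ t, φ t * K (x - t)

theorem convOp_schwartz (φ K : SchwartzMap (EuclideanSpace ℝ (Fin d)) ℂ) :
    convOp φ K = SchwartzMap.convolution (ContinuousLinearMap.mul ℂ ℂ) φ K := by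
  ext x
  rw [SchwartzMap.convolution_apply]
  rfl

theorem schwartz_memLp (φ : SchwartzMap (EuclideanSpace ℝ (Fin d)) ℂ) (p : ℝ≥0∞) :
    MemLp (φ : EuclideanSpace ℝ (Fin d) → ℂ) p volume := φ.memLp p volume

theorem schwartz_eLpNorm_ne_top (φ : SchwartzMap (EuclideanSpace ℝ (Fin d)) ℂ) (p : ℝ≥0∞) :
    eLpNorm (φ : EuclideanSpace ℝ (Fin d) → ℂ) p volume ≠ ⊤ := (schwartz_memLp φ p).eLpNorm_ne_top

theorem eLpNorm_two_fourier (φ : SchwartzMap (EuclideanSpace ℝ (Fin d)) ℂ) :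
    eLpNorm (⇑(𝓕 φ : SchwartzMap (EuclideanSpace ℝ (Fin d)) ℂ)) 2 volume = eLpNorm φ 2 volume := by
  have h := SchwartzMap.norm_fourier_toL2_eq φ
  rw [SchwartzMap.norm_toLp, SchwartzMap.norm_toLp] at h
  have h1 : eLpNorm (⇑(𝓕 φ : SchwartzMap (EuclideanSpace ℝ (Fin d)) ℂ)) 2 volume ≠ ⊤ :=
    schwartz_eLpNorm_ne_top _ 2
  have h2 : eLpNorm φ 2 volume ≠ ⊤ := schwartz_eLpNorm_ne_top φ 2
  exact (ENNReal.toReal_eq_toReal_iff' h1 h2).1 h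

theorem convOp_L2_schwartz (φ K : SchwartzMap (EuclideanSpace ℝ (Fin d)) ℂ)
    (hK : ∀ ξ, ‖(𝓕 K : SchwartzMap (EuclideanSpace ℝ (Fin d)) ℂ) ξ‖ ≤ 1) :
    eLpNorm (convOp φ K) 2 volume ≤ eLpNorm φ 2 volume := by
  rw [convOp_schwartz, ← eLpNorm_two_fourier, ← eLpNorm_two_fourier φ,
    SchwartzMap.fourier_convolution]
  refine eLpNorm_mono fun ξ => ?_
  rw [SchwartzMap.pairing_apply_apply, ContinuousLinearMap.mul_apply', norm_mul]
  exact mul_le_of_le_one_right (norm_nonneg _) (hK ξ)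

theorem integrable_convOp_L2 {φ : EuclideanSpace ℝ (Fin d) → ℂ} (hφ : MemLp φ 2 volume)
    (K : SchwartzMap (EuclideanSpace ℝ (Fin d)) ℂ) (x : EuclideanSpace ℝ (Fin d)) :
    Integrable (fun t => φ t * K (x - t)) := by
  have hmp := Measure.measurePreserving_sub_left (volume : Measure (EuclideanSpace ℝ (Fin d))) x
  exact hφ.integrable_mul ((schwartz_memLp K 2).comp_measurePreserving hmp)

theorem enorm_convOp_le_L2 {φ : EuclideanSpace ℝ (Fin d) → ℂ} (hφ : MemLp φ 2 volume)
    (K : SchwartzMap (EuclideanSpace ℝ (Fin d)) ℂ) (x : EuclideanSpace ℝ (Fin d)) :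
    ‖convOp φ K x‖ₑ ≤ eLpNorm φ 2 volume * eLpNorm K 2 volume := by
  have hmp := Measure.measurePreserving_sub_left (volume : Measure (EuclideanSpace ℝ (Fin d))) x
  have hKx : eLpNorm (K ∘ fun t => x - t) 2 volume = eLpNorm K 2 volume :=
    eLpNorm_comp_measurePreserving K.continuous.aestronglyMeasurable hmp
  rw [← hKx]
  refine (enorm_integral_le_lintegral_enorm _).trans ?_
  rw [← eLpNorm_one_eq_lintegral_enorm]
  have hKm : AEStronglyMeasurable (K ∘ fun t => x - t) volume :=
    (K.continuous.comp (continuous_const.sub continuous_id)).aestronglyMeasurable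
  have := eLpNorm_smul_le_mul_eLpNorm (p := 2) (q := 2) (r := 1) hKm hφ.aestronglyMeasurable
  exact this

/-- The `L²` contraction extends from Schwartz functions to all of `L²` by density and Fatou; this is
needed for truncations, which are not smooth. -/
theorem convOp_L2 {φ : EuclideanSpace ℝ (Fin d) → ℂ} (hφ : MemLp φ 2 volume)
    (K : SchwartzMap (EuclideanSpace ℝ (Fin d)) ℂ)
    (hK : ∀ ξ, ‖(𝓕 K : SchwartzMap (EuclideanSpace ℝ (Fin d)) ℂ) ξ‖ ≤ 1) :
    eLpNorm (convOp φ K) 2 volume ≤ eLpNorm φ 2 volume := by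
  have hex : ∀ n : ℕ, ∃ ψ : SchwartzMap (EuclideanSpace ℝ (Fin d)) ℂ,
      eLpNorm (φ - (ψ : EuclideanSpace ℝ (Fin d) → ℂ)) 2 volume ≤ ENNReal.ofReal (1 / ((n : ℝ) + 1)) := by
    intro n
    obtain ⟨g, h1, h2, h3⟩ := MemLp.exist_eLpNorm_sub_le (by simp) (by norm_num) hφ
      (show (0 : ℝ) < 1 / ((n : ℝ) + 1) by positivity)
    exact ⟨h1.toSchwartzMap h2, h3⟩
  choose ψ hψ using hex
  have hlim0 : Filter.Tendsto (fun n : ℕ => ENNReal.ofReal (1 / ((n : ℝ) + 1))) Filter.atTop (nhds 0) := by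
    have := ENNReal.tendsto_ofReal (tendsto_one_div_add_atTop_nhds_zero_nat (𝕜 := ℝ))
    simpa using this
  have hlim : ∀ x, Filter.Tendsto (fun n => convOp (ψ n) K x) Filter.atTop (nhds (convOp φ K x)) := by
    intro x
    rw [tendsto_iff_edist_tendsto_0]
    have hsq : Filter.Tendsto (fun n : ℕ => ENNReal.ofReal (1 / ((n : ℝ) + 1)) * eLpNorm K 2 volume)
        Filter.atTop (nhds 0) := by
      have := ENNReal.Tendsto.mul_const (b := eLpNorm K 2 volume) hlim0 (Or.inr (schwartz_eLpNorm_ne_top K 2))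
      simpa using this
    refine tendsto_of_tendsto_of_tendsto_of_le_of_le tendsto_const_nhds hsq (fun _ => zero_le) ?_
    intro n
    have e : convOp φ K x - convOp (ψ n) K x = convOp (φ - ⇑(ψ n)) K x := by
      simp only [convOp]
      rw [← integral_sub (integrable_convOp_L2 hφ K x) (integrable_convOp_L2 (schwartz_memLp (ψ n) 2) K x)]
      congr 1
      ext t
      simp [sub_mul]
    simp only
    rw [edist_comm, edist_eq_enorm_sub, e]
    refine (enorm_convOp_le_L2 (hφ.sub (schwartz_memLp (ψ n) 2)) K x).trans ?_
    gcongr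
    exact hψ n
  refine (Lp.eLpNorm_lim_le_liminf_eLpNorm (f := fun n => convOp (ψ n) K) (fun n => ?_) _
    (Filter.Eventually.of_forall hlim)).trans ?_
  · rw [convOp_schwartz]
    exact (SchwartzMap.continuous _).aestronglyMeasurable
  · have hle : ∀ n, eLpNorm (convOp (ψ n) K) 2 volume ≤
        eLpNorm φ 2 volume + ENNReal.ofReal (1 / ((n : ℝ) + 1)) := by
      intro n
      refine (convOp_L2_schwartz (ψ n) K hK).trans ?_
      have e : (ψ n : EuclideanSpace ℝ (Fin d) → ℂ) = φ - (φ - ⇑(ψ n)) := by simp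
      calc eLpNorm (ψ n) 2 volume = eLpNorm (φ - (φ - ⇑(ψ n))) 2 volume := by rw [← e]
        _ ≤ eLpNorm φ 2 volume + eLpNorm (φ - ⇑(ψ n)) 2 volume :=
          eLpNorm_sub_le hφ.aestronglyMeasurable (hφ.sub (schwartz_memLp (ψ n) 2)).aestronglyMeasurable (by norm_num)
        _ ≤ _ := by gcongr; exact hψ n
    have hl : Filter.Tendsto (fun n : ℕ => eLpNorm φ 2 volume + ENNReal.ofReal (1 / ((n : ℝ) + 1)))
        Filter.atTop (nhds (eLpNorm φ 2 volume)) := by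
      simpa using hlim0.const_add (eLpNorm φ 2 volume)
    rw [← hl.liminf_eq]
    exact Filter.liminf_le_liminf (Filter.Eventually.of_forall hle)

theorem enorm_convOp_le_L1 (φ : EuclideanSpace ℝ (Fin d) → ℂ) {K : EuclideanSpace ℝ (Fin d) → ℂ}
    {A : ℝ} (hK : ∀ x, ‖K x‖ ≤ A) (x : EuclideanSpace ℝ (Fin d)) :
    ‖convOp φ K x‖ₑ ≤ ENNReal.ofReal A * ∫⁻ t, ‖φ t‖ₑ := by
  refine (enorm_integral_le_lintegral_enorm _).trans ?_
  rw [← lintegral_const_mul' _ _ (by simp)]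
  refine lintegral_mono fun t => ?_
  simp only [enorm_mul]
  rw [mul_comm]
  gcongr
  rw [← ofReal_norm]
  exact ENNReal.ofReal_le_ofReal (hK _)

theorem eLpNorm_two_sq (f : EuclideanSpace ℝ (Fin d) → ℂ) :
    eLpNorm f 2 volume ^ 2 = ∫⁻ x, ENNReal.ofReal (‖f x‖ ^ 2) := by
  have h := eLpNorm_nnreal_pow_eq_lintegral (f := f) (μ := volume) (p := 2) two_ne_zero
  simp only [NNReal.coe_ofNat, ENNReal.rpow_ofNat, ENNReal.coe_ofNat] at h
  rw [h]
  congr 1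
  ext x
  rw [← ofReal_norm, ENNReal.ofReal_pow (norm_nonneg _)]

/-- The truncation estimate required by `interpolation_aux`: the part of `g` above height `α`
contributes at most `Am` to the convolution, hence at most half of it where it exceeds `2Am`. -/
theorem convOp_level_set (g K : SchwartzMap (EuclideanSpace ℝ (Fin d)) ℂ)
    (hK : ∀ ξ, ‖(𝓕 K : SchwartzMap (EuclideanSpace ℝ (Fin d)) ℂ) ξ‖ ≤ 1) {A : ℝ} (hA : 0 < A)
    (hKA : ∀ x, ‖K x‖ ≤ A) {α m : ℝ} (hm : 0 < m)
    (h : ∫⁻ x in {x | α < ‖g x‖}, ENNReal.ofReal ‖g x‖ ≤ ENNReal.ofReal m) :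
    ∫⁻ x in {x | 2 * (A * m) ≤ ‖convOp g K x‖}, ENNReal.ofReal (‖convOp g K x‖ ^ 2) ≤
      4 * ∫⁻ x in {x | ‖g x‖ ≤ α}, ENNReal.ofReal (‖g x‖ ^ 2) := by
  have hgc := g.continuous
  have hms1 : MeasurableSet {x | α < ‖g x‖} := (isOpen_lt continuous_const hgc.norm).measurableSet
  have hms2 : MeasurableSet {x | ‖g x‖ ≤ α} := (isClosed_le hgc.norm continuous_const).measurableSet
  set g₁ := Set.indicator {x | α < ‖g x‖} g with hg₁
  set g₂ := Set.indicator {x | ‖g x‖ ≤ α} g with hg₂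
  have m1 : MemLp g₁ 2 volume := (schwartz_memLp g 2).indicator hms1
  have m2 : MemLp g₂ 2 volume := (schwartz_memLp g 2).indicator hms2
  have hsum : ∀ x, convOp g K x = convOp g₁ K x + convOp g₂ K x := by
    intro x
    simp only [convOp]
    rw [← integral_add (integrable_convOp_L2 m1 K x) (integrable_convOp_L2 m2 K x)]
    congr 1
    ext t
    rw [← add_mul]
    congr 1
    by_cases ht : ‖g t‖ ≤ α
    · rw [hg₁, hg₂, Set.indicator_of_mem (show t ∈ {x | ‖g x‖ ≤ α} from ht),
        Set.indicator_of_notMem (show t ∉ {x | α < ‖g x‖} from not_lt.2 ht), zero_add]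
    · rw [hg₁, hg₂, Set.indicator_of_notMem (show t ∉ {x | ‖g x‖ ≤ α} from ht),
        Set.indicator_of_mem (show t ∈ {x | α < ‖g x‖} from not_le.1 ht), add_zero]
  have hb1 : ∀ x, ‖convOp g₁ K x‖ ≤ A * m := by
    intro x
    have h1 := enorm_convOp_le_L1 g₁ hKA x
    have h2 : ∫⁻ t, ‖g₁ t‖ₑ ≤ ENNReal.ofReal m := by
      simp_rw [hg₁, enorm_indicator_eq_indicator_enorm]
      rw [lintegral_indicator hms1]
      simpa only [ofReal_norm] using h
    have h3 : ‖convOp g₁ K x‖ₑ ≤ ENNReal.ofReal (A * m) := by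
      rw [ENNReal.ofReal_mul hA.le]
      exact h1.trans (by gcongr)
    rw [← ofReal_norm] at h3
    exact (ENNReal.ofReal_le_ofReal_iff (by positivity)).1 h3
  calc ∫⁻ x in {x | 2 * (A * m) ≤ ‖convOp g K x‖}, ENNReal.ofReal (‖convOp g K x‖ ^ 2)
      ≤ ∫⁻ x in {x | 2 * (A * m) ≤ ‖convOp g K x‖}, 4 * ENNReal.ofReal (‖convOp g₂ K x‖ ^ 2) := by
        refine setLIntegral_mono' ?_ (fun x hx => ?_)
        · rw [convOp_schwartz]
          exact (isClosed_le continuous_const (SchwartzMap.continuous _).norm).measurableSet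
        · rw [show (4 : ℝ≥0∞) = ENNReal.ofReal 4 by simp, ← ENNReal.ofReal_mul (by norm_num)]
          apply ENNReal.ofReal_le_ofReal
          have hx' : 2 * (A * m) ≤ ‖convOp g K x‖ := hx
          have h1 : ‖convOp g K x‖ ≤ ‖convOp g₁ K x‖ + ‖convOp g₂ K x‖ := by
            rw [hsum]; exact norm_add_le _ _
          have h2 := hb1 x
          have h3 : ‖convOp g K x‖ ≤ 2 * ‖convOp g₂ K x‖ := by linarith
          calc ‖convOp g K x‖ ^ 2 ≤ (2 * ‖convOp g₂ K x‖) ^ 2 := by gcongr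
            _ = _ := by ring
    _ ≤ ∫⁻ x, 4 * ENNReal.ofReal (‖convOp g₂ K x‖ ^ 2) := setLIntegral_le_lintegral _ _
    _ = 4 * eLpNorm (convOp g₂ K) 2 volume ^ 2 := by
        rw [lintegral_const_mul' _ _ (by simp), eLpNorm_two_sq]
    _ ≤ 4 * eLpNorm g₂ 2 volume ^ 2 := by gcongr; exact convOp_L2 m2 K hK
    _ = _ := by
        rw [eLpNorm_two_sq, ← lintegral_indicator hms2]
        congr 2
        ext x
        by_cases hx : ‖g x‖ ≤ α
        · rw [hg₂, Set.indicator_of_mem (show x ∈ {x | ‖g x‖ ≤ α} from hx),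
            Set.indicator_of_mem (show x ∈ {x | ‖g x‖ ≤ α} from hx)]
        · rw [hg₂, Set.indicator_of_notMem (show x ∉ {x | ‖g x‖ ≤ α} from hx),
            Set.indicator_of_notMem (show x ∉ {x | ‖g x‖ ≤ α} from hx)]
          simp

/-- Convolution with a kernel bounded by `A` whose Fourier transform is bounded by `1` maps `L^{p'}`
to `L^p` with norm at most `2A^{1-2/p}`. For `p = ∞` the junk value `p.toReal = 0` gives the correct
exponent `1`. -/
theorem eLpNorm_convOp_le (g K : SchwartzMap (EuclideanSpace ℝ (Fin d)) ℂ)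
    (hK : ∀ ξ, ‖(𝓕 K : SchwartzMap (EuclideanSpace ℝ (Fin d)) ℂ) ξ‖ ≤ 1) {A : ℝ} (hA : 0 < A)
    (hKA : ∀ x, ‖K x‖ ≤ A) {p p' : ℝ≥0∞} (hp : 2 ≤ p) (hpp : 1 / p + 1 / p' = 1) :
    eLpNorm (convOp g K) p volume ≤
      ENNReal.ofReal (2 * A ^ (1 - 2 / p.toReal)) * eLpNorm g p' volume := by
  rcases eq_or_ne p ⊤ with rfl | hptop
  · have hp' : p' = 1 := by
      simp at hpp; exact hpp
    subst hp'
    rw [ENNReal.toReal_top, div_zero, sub_zero, Real.rpow_one, eLpNorm_exponent_top,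
      eLpNorm_one_eq_lintegral_enorm]
    refine eLpNormEssSup_le_of_ae_enorm_bound (Filter.Eventually.of_forall fun x => ?_)
    refine (enorm_convOp_le_L1 g hKA x).trans ?_
    gcongr
    linarith
  rcases hp.eq_or_lt with rfl | hp2
  · have hp' : p' = 2 := by
      have h1 : p'⁻¹ = 2⁻¹ := by
        rw [one_div, one_div, ← ENNReal.inv_two_add_inv_two] at hpp
        exact (ENNReal.add_right_inj (by simp)).1 hpp
      exact inv_inj.1 h1
    subst hp'
    refine (convOp_L2_schwartz g K hK).trans ?_
    rw [ENNReal.toReal_ofNat, div_self two_ne_zero, sub_self, Real.rpow_zero, mul_one]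
    refine le_mul_of_one_le_left (zero_le) ?_
    simp
  have hp0 : p ≠ 0 := (lt_trans (by norm_num) hp2).ne'
  have hP2 : 2 < p.toReal := by
    have := (ENNReal.toReal_lt_toReal (by simp) hptop).2 hp2
    simpa using this
  have hconj : p.HolderConjugate p' := by
    rw [ENNReal.holderConjugate_iff]; simpa using hpp
  have hPQ : p.toReal.HolderConjugate p'.toReal := ENNReal.HolderConjugate.toReal (by linarith)
  have hQ0 : 0 < p'.toReal := hPQ.symm.pos
  have hp'0 : p' ≠ 0 := by intro h; rw [h] at hQ0; simp at hQ0
  have hp't : p' ≠ ⊤ := by intro h; rw [h] at hQ0; simp at hQ0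
  set P := p.toReal with hP
  set Q := p'.toReal with hQ
  rcases eq_or_ne (eLpNorm g p' volume) 0 with h0 | h0
  · have hg0 := (eLpNorm_eq_zero_iff g.continuous.aestronglyMeasurable hp'0).1 h0
    have : convOp g K = 0 := by
      ext x
      simp only [convOp, Pi.zero_apply]
      refine integral_eq_zero_of_ae ?_
      filter_upwards [hg0] with t ht
      simp [ht]
    rw [this]; simp
  have hgfin : eLpNorm g p' volume ≠ ⊤ := schwartz_eLpNorm_ne_top g p'
  set N : ℝ := (eLpNorm g p' volume).toReal with hN
  have hN0 : 0 < N := ENNReal.toReal_pos h0 hgfin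
  have hNe : eLpNorm g p' volume = ENNReal.ofReal N := (ENNReal.ofReal_toReal hgfin).symm
  have hlin : ∀ (f : EuclideanSpace ℝ (Fin d) → ℂ) {R : ℝ}, 0 < R →
      ∀ x, ‖f x‖ₑ ^ R = ENNReal.ofReal (‖f x‖ ^ R) := by
    intro f R hR x
    rw [← ofReal_norm, ENNReal.ofReal_rpow_of_nonneg (norm_nonneg _) hR.le]
  have hgB : ∫⁻ x, ENNReal.ofReal (‖g x‖ ^ Q) = ENNReal.ofReal (N ^ Q) := by
    simp_rw [← hlin g hQ0]
    rw [← ENNReal.ofReal_rpow_of_nonneg hN0.le hQ0.le, ← hNe,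
      eLpNorm_eq_lintegral_rpow_enorm_toReal hp'0 hp't, ← ENNReal.rpow_mul, ← hQ,
      one_div_mul_cancel hQ0.ne', ENNReal.rpow_one]
  have hcm : Continuous (convOp g K) := by
    rw [convOp_schwartz]; exact SchwartzMap.continuous _
  have key := interpolation_aux (μ := (volume : Measure (EuclideanSpace ℝ (Fin d))))
    (F := fun x => ‖convOp g K x‖) (g := fun x => ‖g x‖)
    hcm.norm.measurable g.continuous.norm.measurable (fun _ => norm_nonneg _)
    (fun _ => norm_nonneg _) hPQ hP2 hA (by positivity : 0 < N ^ Q) hgB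
    (fun α _ m hm h => convOp_level_set g K hK hA hKA hm h)
  rw [eLpNorm_eq_lintegral_rpow_enorm_toReal hp0 hptop, hNe, ← hP]
  simp_rw [hlin (convOp g K) (by linarith : 0 < P)]
  refine (ENNReal.rpow_le_rpow key (by positivity)).trans (le_of_eq ?_)
  have hP0 : 0 < P := by linarith
  rw [ENNReal.ofReal_rpow_of_nonneg (by positivity) (by positivity), ← ENNReal.ofReal_mul (by positivity)]
  congr 1
  rw [Real.mul_rpow (by positivity) (by positivity), Real.mul_rpow (by positivity) (by positivity),
    ← Real.rpow_mul (by norm_num), ← Real.rpow_mul hA.le, ← Real.rpow_mul hN0.le,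
    ← Real.rpow_mul hN0.le, mul_one_div_cancel hP0.ne', Real.rpow_one]
  congr 2
  · congr 1; field_simp
  · have : Q * (P - 1) * (1 / P) = 1 := by
      rw [hPQ.conjugate_eq]
      have : P - 1 ≠ 0 := by linarith
      field_simp
    rw [this, Real.rpow_one]
end convolution

/-! ### The annulus cutoff and the final estimate -/

section assembly

/-- The denominator is locally a finite sum of smooth functions, and it is at least `1` because every
real number is within `1/2 ≤ (2/3)κ` of an integer. -/
theorem zetaNorm_contDiff {ζ : ℝ → ℝ} {κ : ℝ} (hκ : 1 ≤ κ) (hζ_smooth : ContDiff ℝ (⊤ : ℕ∞) ζ)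
    (hζ_nonneg : ∀ s, 0 ≤ ζ s) (hζ_one : ∀ s : ℝ, |s| ≤ 2 / 3 * κ → ζ s = 1)
    (hζ_zero : ∀ s : ℝ, 3 / 4 * κ < |s| → ζ s = 0) :
    ContDiff ℝ (⊤ : ℕ∞) (zetaNorm ζ) := by
  have hfin : ∀ R : ℝ, ∀ s : ℝ, |s| < R → ∀ ν : ℤ,
      ν ∉ Finset.Icc (-⌈R + 3 / 4 * κ⌉) ⌈R + 3 / 4 * κ⌉ → ζ (s - ν) = 0 := by
    intro R s hs ν hν
    apply hζ_zero
    by_contra hcon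
    push Not at hcon
    apply hν
    have h1 := Int.le_ceil (R + 3 / 4 * κ)
    rw [abs_lt] at hs
    rw [abs_le] at hcon
    rw [Finset.mem_Icc]
    constructor
    · have : (-⌈R + 3 / 4 * κ⌉ : ℝ) ≤ ν := by linarith
      exact_mod_cast this
    · have : (ν : ℝ) ≤ (⌈R + 3 / 4 * κ⌉ : ℝ) := by linarith
      exact_mod_cast this
  have hsm : ContDiff ℝ (⊤ : ℕ∞) (fun s => ∑' ν : ℤ, ζ (s - ν)) := by
    rw [contDiff_iff_contDiffAt]
    intro s₀
    have heq : (fun s => ∑ ν ∈ Finset.Icc (-⌈(|s₀| + 1) + 3 / 4 * κ⌉) ⌈(|s₀| + 1) + 3 / 4 * κ⌉,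
        ζ (s - (ν : ℝ))) =ᶠ[nhds s₀] (fun s => ∑' ν : ℤ, ζ (s - ν)) := by
      have : ∀ᶠ s in nhds s₀, |s| < |s₀| + 1 :=
        continuous_abs.continuousAt.eventually_lt continuousAt_const (by simp)
      filter_upwards [this] with s hs
      rw [tsum_eq_sum fun ν hν => hfin _ s hs ν hν]
    refine ContDiffAt.congr_of_eventuallyEq ?_ heq.symm
    refine ContDiff.contDiffAt ?_
    exact ContDiff.sum fun ν _ => hζ_smooth.comp (contDiff_id.sub contDiff_const)
  refine hζ_smooth.div hsm fun s => ?_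
  have hsum : Summable fun ν : ℤ => ζ (s - ν) :=
    summable_of_ne_finset_zero (hfin (|s| + 1) s (by simp))
  have h1 : ζ (s - (round s : ℤ)) = 1 := hζ_one _ (by
    have := abs_sub_round s
    linarith)
  have h2 := hsum.le_tsum (round s) (fun ν _ => hζ_nonneg _)
  rw [h1] at h2
  linarith

theorem zetaNorm_eq_zero {ζ : ℝ → ℝ} {κ : ℝ} (hζ_zero : ∀ s : ℝ, 3 / 4 * κ < |s| → ζ s = 0)
    {s : ℝ} (hs : 3 / 4 * κ < |s|) : zetaNorm ζ s = 0 := by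
  rw [zetaNorm, hζ_zero s hs, zero_div]

variable {d : ℕ}

/-- A profile of `‖ξ‖ - L` supported away from the origin defines a smooth function of `ξ`, although
the norm itself is singular at `0`. -/
theorem radial_contDiff {η : ℝ → ℝ} (hη : ContDiff ℝ (⊤ : ℕ∞) η) {r L : ℝ} (hrL : r < L)
    (hη0 : ∀ v, r < |v| → η v = 0) {G : EuclideanSpace ℝ (Fin d) → ℂ}
    (hG : ∀ ξ ≠ 0, ContDiffAt ℝ (⊤ : ℕ∞) G ξ) :
    ContDiff ℝ (⊤ : ℕ∞) (fun ξ : EuclideanSpace ℝ (Fin d) => G ξ * ((η (‖ξ‖ - L) : ℝ) : ℂ)) := by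
  rw [contDiff_iff_contDiffAt]
  intro ξ
  by_cases hξ : ξ = 0
  · subst hξ
    have : ∀ᶠ ξ : EuclideanSpace ℝ (Fin d) in nhds 0, ‖ξ‖ < L - r :=
      continuous_norm.continuousAt.eventually_lt continuousAt_const (by simpa using hrL)
    refine (contDiffAt_const (c := (0 : ℂ))).congr_of_eventuallyEq ?_
    filter_upwards [this] with ξ h
    rw [hη0 _ (by rw [lt_abs]; right; linarith)]
    simp
  · refine (hG ξ hξ).mul ?_
    have h1 : ContDiffAt ℝ (⊤ : ℕ∞) (fun ξ : EuclideanSpace ℝ (Fin d) => η (‖ξ‖ - L)) ξ :=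
      hη.contDiffAt.comp ξ ((contDiffAt_norm ℝ hξ).sub contDiffAt_const)
    exact Complex.ofRealCLM.contDiff.contDiffAt.comp ξ h1

theorem radial_hasCompactSupport {η : ℝ → ℝ} {r L : ℝ}
    (hη0 : ∀ v, r < |v| → η v = 0) (G : EuclideanSpace ℝ (Fin d) → ℂ) :
    HasCompactSupport (fun ξ : EuclideanSpace ℝ (Fin d) => G ξ * ((η (‖ξ‖ - L) : ℝ) : ℂ)) := by
  refine HasCompactSupport.intro (isCompact_closedBall 0 (L + r)) fun ξ hξ => ?_
  rw [mem_closedBall_zero_iff, not_le] at hξ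
  rw [hη0 _ (by rw [lt_abs]; left; linarith)]
  simp

theorem exp_norm_contDiffAt (T : ℝ) (ξ : EuclideanSpace ℝ (Fin d)) (hξ : ξ ≠ 0) :
    ContDiffAt ℝ (⊤ : ℕ∞) (fun ξ : EuclideanSpace ℝ (Fin d) =>
      Complex.exp (Complex.I * ((T * ‖ξ‖ : ℝ) : ℂ))) ξ := by
  have h1 : ContDiffAt ℝ (⊤ : ℕ∞) (fun ξ : EuclideanSpace ℝ (Fin d) => T * ‖ξ‖) ξ :=
    contDiffAt_const.mul (contDiffAt_norm ℝ hξ)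
  exact (contDiffAt_const.mul (Complex.ofRealCLM.contDiff.contDiffAt.comp ξ h1)).cexp

theorem fourierInv_mul_eq_convOp (h M : SchwartzMap (EuclideanSpace ℝ (Fin d)) ℂ) :
    (𝓕⁻ fun ξ => h ξ * M ξ) =
      convOp (𝓕⁻ h : SchwartzMap (EuclideanSpace ℝ (Fin d)) ℂ)
        (𝓕⁻ M : SchwartzMap (EuclideanSpace ℝ (Fin d)) ℂ) := by
  rw [convOp_schwartz]
  set cv := SchwartzMap.convolution (ContinuousLinearMap.mul ℂ ℂ)
    (𝓕⁻ h : SchwartzMap (EuclideanSpace ℝ (Fin d)) ℂ)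
    (𝓕⁻ M : SchwartzMap (EuclideanSpace ℝ (Fin d)) ℂ) with hcv
  have e : (fun ξ => h ξ * M ξ) = ⇑(𝓕 cv : SchwartzMap (EuclideanSpace ℝ (Fin d)) ℂ) := by
    ext ξ
    rw [hcv, SchwartzMap.fourier_convolution, FourierTransform.fourier_fourierInv_eq,
      FourierTransform.fourier_fourierInv_eq, SchwartzMap.pairing_apply_apply,
      ContinuousLinearMap.mul_apply']
  rw [e, ← SchwartzMap.fourierInv_coe, FourierTransform.fourierInv_fourier_eq]

/-- The constant `C₀` of the kernel bound enters the `L^{p'} → L^p` bound only through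
`max 1 C₀`, because the interpolation exponent `θ = 1 - 2/p` is at most `1`. -/
theorem interpolated_constant_le {C₀ τ b θ : ℝ} (hτ : 0 < τ) (hθ1 : θ ≤ 1) :
    2 * (max 1 C₀ * τ ^ (-b)) ^ θ ≤ 2 * max 1 C₀ * τ ^ (-b * θ) := by
  have h1 : 1 ≤ max 1 C₀ := le_max_left _ _
  rw [Real.mul_rpow (by linarith) (by positivity), ← Real.rpow_mul hτ.le, mul_assoc]
  have h2 : max 1 C₀ ^ θ ≤ max 1 C₀ := Real.rpow_le_self_of_one_le h1 hθ1
  gcongr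

end assembly

/-- Variant of the Klainerman–Tataru improved dispersive estimate: for `|t| ≥ cλ` and
`λ ≥ κ + 1`, `‖e^{±it|∇|} Q_{κ,λ} f‖_{L^p} ≤ C (|t|/λ)^{−((d−1)/2)(1−2/p)} ‖Q_{κ,λ} f‖_{L^{p'}}`
for all `p ∈ [2,∞]` with conjugate exponent `p'`. -/
theorem improved_dispersive_estimate_annulus (d : ℕ) (hd : 2 ≤ d) (c κ : ℝ) (hc : 0 < c)
    (hκ : 1 ≤ κ)
    (ζ : ℝ → ℝ) (hζ_smooth : ContDiff ℝ (⊤ : ℕ∞) ζ) (hζ_nonneg : ∀ s, 0 ≤ ζ s)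
    (hζ_one : ∀ s : ℝ, |s| ≤ 2 / 3 * κ → ζ s = 1)
    (hζ_zero : ∀ s : ℝ, 3 / 4 * κ < |s| → ζ s = 0) :
    ∃ C > 0, ∀ f : SchwartzMap (EuclideanSpace ℝ (Fin d)) ℂ,
      ∀ lam : ℕ, κ + 1 ≤ (lam : ℝ) → ∀ t : ℝ, c * lam ≤ |t| → ∀ ε : ℝ, ε = 1 ∨ ε = -1 →
      ∀ p p' : ℝ≥0∞, 2 ≤ p → 1 / p + 1 / p' = 1 →
        eLpNorm
            (𝓕⁻ fun ξ : EuclideanSpace ℝ (Fin d) =>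
              Complex.exp (Complex.I * ((ε * t * ‖ξ‖ : ℝ) : ℂ)) *
                ((zetaAnn d ζ lam ξ : ℝ) : ℂ) * 𝓕 (⇑f) ξ)
            p volume
          ≤ ENNReal.ofReal
              (C * (|t| / lam) ^ (-(((d : ℝ) - 1) / 2) * (1 - 2 / p.toReal))) *
            eLpNorm
              (𝓕⁻ fun ξ : EuclideanSpace ℝ (Fin d) =>
                ((zetaAnn d ζ lam ξ : ℝ) : ℂ) * 𝓕 (⇑f) ξ)
              p' volume := by
  -- A wider cutoff, equal to `1` on the support of `zetaNorm ζ`.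
  let χ : ContDiffBump (0 : ℝ) := ⟨3 / 4 * κ, 7 / 8 * κ, by linarith, by linarith⟩
  have hχs : ContDiff ℝ (⊤ : ℕ∞) χ := χ.contDiff
  have hχ0 : ∀ v, 7 / 8 * κ < |v| → χ v = 0 := fun v hv =>
    χ.zero_of_le_dist (by rw [dist_zero_right, Real.norm_eq_abs]; exact hv.le)
  have hχ1 : ∀ v, |v| ≤ 3 / 4 * κ → χ v = 1 := fun v hv =>
    χ.one_of_mem_closedBall (by rw [mem_closedBall_zero_iff, Real.norm_eq_abs]; exact hv)
  obtain ⟨C₀, -, hC₀⟩ := kernel_bound d hχs hχ0 (by linarith : 7 / 8 * κ < κ) hκ hc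
  have hmax : 1 ≤ max 1 C₀ := le_max_left _ _
  refine ⟨2 * max 1 C₀, by positivity, ?_⟩
  intro f lam hlam t ht ε hε p p' hp hpp
  have hL : (0 : ℝ) < lam := by linarith
  have hT : |ε * t| = |t| := by
    rcases hε with rfl | rfl <;> simp
  have ht0 : 0 < |t| := lt_of_lt_of_le (by positivity) ht
  have hτ : 0 < |t| / lam := by positivity
  have hzs := zetaNorm_contDiff hκ hζ_smooth hζ_nonneg hζ_one hζ_zero
  have hz0 : ∀ v, 3 / 4 * κ < |v| → zetaNorm ζ v = 0 := fun v hv => zetaNorm_eq_zero hζ_zero hv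
  -- The two Schwartz functions whose product is the Fourier transform of the left-hand side.
  let h : SchwartzMap (EuclideanSpace ℝ (Fin d)) ℂ :=
    (radial_hasCompactSupport (L := lam) hz0
      (⇑(𝓕 f : SchwartzMap (EuclideanSpace ℝ (Fin d)) ℂ))).toSchwartzMap
    (radial_contDiff hzs (by linarith : 3 / 4 * κ < lam) hz0 fun ξ _ =>
      ((𝓕 f : SchwartzMap (EuclideanSpace ℝ (Fin d)) ℂ).smooth _).contDiffAt)
  let M : SchwartzMap (EuclideanSpace ℝ (Fin d)) ℂ :=
    (radial_hasCompactSupport (L := lam) hχ0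
      (fun ξ => Complex.exp (Complex.I * ((ε * t * ‖ξ‖ : ℝ) : ℂ)))).toSchwartzMap
    (radial_contDiff hχs (by linarith : 7 / 8 * κ < lam) hχ0 fun ξ hξ =>
      exp_norm_contDiffAt (ε * t) ξ hξ)
  have hh : ∀ ξ, h ξ = 𝓕 (⇑f) ξ * ((zetaAnn d ζ lam ξ : ℝ) : ℂ) := fun ξ => by
    rw [← SchwartzMap.fourier_coe]; rfl
  have hM : ⇑M = waveSym d χ lam (ε * t) := rfl
  have hleft : (fun ξ : EuclideanSpace ℝ (Fin d) =>
      Complex.exp (Complex.I * ((ε * t * ‖ξ‖ : ℝ) : ℂ)) *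
        ((zetaAnn d ζ lam ξ : ℝ) : ℂ) * 𝓕 (⇑f) ξ) = fun ξ => h ξ * M ξ := by
    ext ξ
    rw [hh, hM, waveSym]
    by_cases hξ : |‖ξ‖ - lam| ≤ 3 / 4 * κ
    · rw [hχ1 _ hξ]; push_cast; ring
    · rw [zetaAnn, hz0 _ (not_le.1 hξ)]; simp
  have hright : (𝓕⁻ fun ξ : EuclideanSpace ℝ (Fin d) =>
      ((zetaAnn d ζ lam ξ : ℝ) : ℂ) * 𝓕 (⇑f) ξ) =
        ⇑(𝓕⁻ h : SchwartzMap (EuclideanSpace ℝ (Fin d)) ℂ) := by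
    rw [SchwartzMap.fourierInv_coe]
    congr 1
    ext ξ
    rw [hh, mul_comm]
  rw [hleft, hright, fourierInv_mul_eq_convOp]
  have hsym : ∀ ξ, ‖(𝓕 (𝓕⁻ M : SchwartzMap (EuclideanSpace ℝ (Fin d)) ℂ) :
      SchwartzMap (EuclideanSpace ℝ (Fin d)) ℂ) ξ‖ ≤ 1 := by
    intro ξ
    rw [FourierTransform.fourier_fourierInv_eq, hM, waveSym, norm_mul, mul_comm Complex.I,
      Complex.norm_exp_ofReal_mul_I, one_mul, Complex.norm_real, Real.norm_of_nonneg χ.nonneg]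
    exact χ.le_one
  have hker : ∀ x, ‖(𝓕⁻ M : SchwartzMap (EuclideanSpace ℝ (Fin d)) ℂ) x‖ ≤
      max 1 C₀ * (|t| / lam) ^ (-(((d : ℝ) - 1) / 2)) := by
    intro x
    rw [SchwartzMap.fourierInv_coe, hM]
    refine (hC₀ lam (ε * t) hlam (by rwa [hT]) x).trans ?_
    rw [hT]
    gcongr
    exact le_max_right _ _
  have hθ : 1 - 2 / p.toReal ≤ 1 := by
    have : 0 ≤ 2 / p.toReal := by positivity
    linarith
  refine (eLpNorm_convOp_le _ _ hsym (by positivity) hker hp hpp).trans ?_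
  gcongr ENNReal.ofReal ?_ * _
  exact interpolated_constant_le hτ hθ
end

section
/- Let d ≥ 2, c > 0 and κ ≥ 1, and define K_{κ,λ}(t,x) = ∫_{ℝ^d} e^{i(t|ξ| + x·ξ)} ζ̃_{κ,λ}(ξ) dξ. There exists a constant C > 0 such that sup_{x∈ℝ^d} |K_{κ,λ}(t,x)| ≤ C (t/λ)^{−(d−1)/2} for all λ ∈ ℕ with λ ≥ κ + 1 and all t ≥ cλ. -/
/-!
The bound is obtained by subordinating the radial symbol to Gaussians. Put `l = λ` and `μ = t/l`, and
write `e^{it|ξ|} ζ(|ξ| - l) = e^{-(l⁻² - i t/(2l)) |ξ|²} h(|ξ|²)`, where `h` (`radialProfile`) is smooth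
and supported where `|√y - l| ≤ κ`. Fourier inversion for `h`, Fubini and the explicit Gaussian
integral (`norm_integral_subordination_le`) give, uniformly in `x`,
`|K(t,x)| ≤ ∫ |ĥ(w)| (π / |l⁻² - i s|)^{d/2} dw` with `s = t/(2l) + 2πw`.

* Where `|s| ≥ μ/8` the weight is at most `(8π/μ)^{d/2}`, and `‖ĥ‖_{L¹} ≤ D √μ`: the support of `h`
  has length `4lκ`, `h` is bounded, and `|h'| ≲ t/l²` because the phase of `h` is linearized at
  `y = l²`; then `integral_norm_fourier_le` applies. The product is `O(μ^{-(d-1)/2})`.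
* Where `|s| ≤ μ/8` the weight is at most `(π l²)^{d/2}`, but `ĥ(w)` is an oscillatory integral
  without stationary points, so `|ĥ(w)| ≲ l t^{-(d+1)}` (`norm_fourier_radialProfile_le`). These `w`
  form an interval of length `μ/(8π)`, and the contribution is `O(μ^{-d})`, which suffices as `μ ≥ c`.
-/

open MeasureTheory Complex
open scoped RealInnerProductSpace ENNReal
open scoped FourierTransform SchwartzMap

/-! ### The `L¹` norm of a Fourier transform -/

/-- Bernstein-type bound for `‖ĥ‖_{L¹}`: by AM-GM,
`2 |ĥ| ≤ ε (1 + (w/a)²)⁻¹ + ε⁻¹ (1 + (w/a)²) |ĥ|²`, and Plancherel for `h` and `h'` controls the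
integral of the second term. The parameters `a` and `ε` are free, to be optimised later. -/
lemma integral_norm_fourier_le_s2 (h : 𝓢(ℝ, ℂ)) {a ε : ℝ} (ha : 0 < a) (hε : 0 < ε) :
    ∫ w, ‖𝓕 h w‖ ≤ (ε * (a * Real.pi) +
      ε⁻¹ * ((∫ y, ‖h y‖ ^ 2) + (a ^ 2)⁻¹ * ∫ y, ‖deriv h y‖ ^ 2)) / 2 := by
  set g : 𝓢(ℝ, ℂ) := SchwartzMap.derivCLM ℂ ℂ h with hg
  have hgc : ∀ y, g y = deriv h y := fun y => SchwartzMap.derivCLM_apply ℂ h y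
  have hgc' : (g : ℝ → ℂ) = deriv h := funext hgc
  have hsq : ∀ f : 𝓢(ℝ, ℂ), Integrable fun y => ‖f y‖ ^ 2 := fun f =>
    (memLp_two_iff_integrable_sq_norm (f.continuous.aestronglyMeasurable)).1 (f.memLp 2 volume)
  have hpt : ∀ w, w ^ 2 * ‖𝓕 h w‖ ^ 2 ≤ ‖𝓕 g w‖ ^ 2 := by
    intro w
    have h1 : 𝓕 g w = (2 * Real.pi * I * w) • 𝓕 h w := by
      rw [SchwartzMap.fourier_coe, SchwartzMap.fourier_coe, hgc', Real.fourier_deriv h.integrable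
        h.differentiable (by rw [← hgc']; exact g.integrable)]
    rw [h1, norm_smul, mul_pow]
    refine mul_le_mul_of_nonneg_right ?_ (sq_nonneg _)
    simp only [norm_mul, norm_real, Complex.norm_I, Complex.norm_ofNat, Real.norm_eq_abs, mul_one,
      mul_pow, sq_abs]
    have : (1:ℝ) ≤ 2 ^ 2 * Real.pi ^ 2 := by nlinarith [Real.pi_gt_three]
    nlinarith [sq_nonneg w]
  have hF := SchwartzMap.integral_norm_sq_fourier h
  have hG := SchwartzMap.integral_norm_sq_fourier g
  have hI1 : Integrable fun w : ℝ => (1 + (w / a) ^ 2)⁻¹ :=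
    integrable_inv_one_add_sq.comp_div ha.ne'
  have hI1' : ∫ w : ℝ, (1 + (w / a) ^ 2)⁻¹ = a * Real.pi := by
    rw [Measure.integral_comp_div (fun w : ℝ => (1 + w ^ 2)⁻¹) a, integral_univ_inv_one_add_sq,
      abs_of_pos ha, smul_eq_mul]
  have hIF := hsq (𝓕 h)
  have hIG := hsq (𝓕 g)
  calc ∫ w, ‖𝓕 h w‖
      ≤ ∫ w, (ε * (1 + (w / a) ^ 2)⁻¹ +
          ε⁻¹ * (‖𝓕 h w‖ ^ 2 + (a ^ 2)⁻¹ * ‖𝓕 g w‖ ^ 2)) / 2 := by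
        refine integral_mono (𝓕 h).integrable.norm
          (((hI1.const_mul _).add ((hIF.add (hIG.const_mul _)).const_mul _)).div_const _) ?_
        intro w
        set m := ‖𝓕 h w‖
        have hP : 0 < 1 + (w / a) ^ 2 := by positivity
        have h2 : (1 + (w / a) ^ 2) * m ^ 2 ≤ m ^ 2 + (a ^ 2)⁻¹ * ‖𝓕 g w‖ ^ 2 := by
          have := mul_le_mul_of_nonneg_left (hpt w) (by positivity : 0 ≤ (a ^ 2)⁻¹)
          calc _ = m ^ 2 + (a ^ 2)⁻¹ * (w ^ 2 * m ^ 2) := by field_simp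
            _ ≤ _ := by linarith
        have h3 : m * 2 ≤ ε * (1 + (w / a) ^ 2)⁻¹ + ε⁻¹ * ((1 + (w / a) ^ 2) * m ^ 2) := by
          set P := 1 + (w / a) ^ 2
          have : ε * P⁻¹ + ε⁻¹ * (P * m ^ 2) - m * 2 = ε⁻¹ * P⁻¹ * (P * m - ε) ^ 2 := by
            field_simp; ring
          have h4 : 0 ≤ ε⁻¹ * P⁻¹ * (P * m - ε) ^ 2 := by positivity
          linarith
        have h4 := mul_le_mul_of_nonneg_left h2 (by positivity : 0 ≤ ε⁻¹)
        show m ≤ _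
        linarith
    _ = _ := by
        have hI2 : Integrable fun w => ε⁻¹ * (‖𝓕 h w‖ ^ 2 + (a ^ 2)⁻¹ * ‖𝓕 g w‖ ^ 2) :=
          (hIF.add (hIG.const_mul _)).const_mul _
        rw [integral_div, integral_add (hI1.const_mul _) hI2, integral_const_mul, hI1',
          integral_const_mul, integral_add hIF (hIG.const_mul _), integral_const_mul, hF, hG, hgc']

/-! ### Subordination to Gaussians -/

/-- An oscillating Gaussian times a function `h` of `|ξ|²`: expanding `h(|ξ|²)` by Fourier inversion
turns the integral into a superposition of Gaussian integrals with complex parameters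
`β - i(ω + 2πw)`, each of which is explicitly computable and bounded uniformly in `x`. -/
lemma norm_integral_subordination_le (d : ℕ) (h : 𝓢(ℝ, ℂ)) {β : ℝ} (hβ : 0 < β) (ω : ℝ)
    (x : EuclideanSpace ℝ (Fin d)) :
    ‖∫ ξ : EuclideanSpace ℝ (Fin d),
        cexp (-((β : ℂ) - ω * I) * (‖ξ‖ : ℂ) ^ 2 + I * (⟪x, ξ⟫ : ℝ)) * h (‖ξ‖ ^ 2)‖
      ≤ ∫ w, ‖𝓕 h w‖ * (Real.pi / ‖(β : ℂ) - (ω + 2 * Real.pi * w : ℝ) * I‖) ^ ((d : ℝ) / 2) := by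
  set b : ℝ → ℂ := fun w => (β : ℂ) - (ω + 2 * Real.pi * w : ℝ) * I with hb
  have hbre : ∀ w, (b w).re = β := by intro w; simp [hb]
  have hinv : ∀ y : ℝ, h y = ∫ w, cexp ((2 * Real.pi * w * y : ℝ) * I) * 𝓕 h w := by
    intro y
    have h1 : 𝓕⁻ (𝓕 h) = h := FourierTransform.fourierInv_fourier_eq h
    have h2 : h y = 𝓕⁻ (𝓕 h) y := by rw [h1]
    rw [h2, SchwartzMap.fourierInv_coe, Real.fourierInv_eq']
    refine integral_congr_ae (Filter.Eventually.of_forall fun w => ?_)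
    simp only [smul_eq_mul]
    have h3 : ⟪w, y⟫ = w * y := by simp [mul_comm]
    rw [h3, mul_assoc (2 * Real.pi)]
  have hgauss : Integrable fun ξ : EuclideanSpace ℝ (Fin d) =>
      cexp (-((β : ℂ) - ω * I) * (‖ξ‖ : ℂ) ^ 2 + I * (⟪x, ξ⟫ : ℝ)) := by
    exact GaussianFourier.integrable_cexp_neg_mul_sq_norm_add (by simpa using hβ) I x
  have key : ∫ ξ : EuclideanSpace ℝ (Fin d),
        cexp (-((β : ℂ) - ω * I) * (‖ξ‖ : ℂ) ^ 2 + I * (⟪x, ξ⟫ : ℝ)) * h (‖ξ‖ ^ 2)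
      = ∫ w, 𝓕 h w * ∫ ξ : EuclideanSpace ℝ (Fin d),
          cexp (-(b w) * (‖ξ‖ : ℂ) ^ 2 + I * (⟪x, ξ⟫ : ℝ)) := by
    simp_rw [hinv, ← integral_const_mul]
    rw [integral_integral_swap]
    · refine integral_congr_ae (Filter.Eventually.of_forall fun w => ?_)
      refine integral_congr_ae (Filter.Eventually.of_forall fun ξ => ?_)
      show _ * (_ * _) = _ * _
      rw [← mul_assoc, ← Complex.exp_add, mul_comm]
      congr 2
      simp only [hb]; push_cast; ring
    · have := hgauss.mul_prod ((𝓕 h).integrable (μ := volume))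
      refine this.mono ?_ (Filter.Eventually.of_forall fun z => ?_)
      · have hc := (𝓕 h).continuous
        refine Continuous.aestronglyMeasurable ?_
        simp only [Function.uncurry_def]
        fun_prop
      · simp only [Function.uncurry_def, norm_mul, norm_exp_ofReal_mul_I, one_mul, le_refl]
  rw [key]
  have hbn : ∀ w, β ≤ ‖b w‖ := fun w => by
    rw [← hbre w]; exact (le_abs_self _).trans (abs_re_le_norm _)
  have hb0 : ∀ w, 0 < ‖b w‖ := fun w => hβ.trans_le (hbn w)
  refine norm_integral_le_of_norm_le ?_ (Filter.Eventually.of_forall fun w => ?_)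
  · refine ((𝓕 h).integrable.norm.mul_const ((Real.pi / β) ^ ((d : ℝ) / 2))).mono ?_
      (Filter.Eventually.of_forall fun w => ?_)
    · refine Continuous.aestronglyMeasurable ?_
      have hc := (𝓕 h).continuous
      refine hc.norm.mul (Continuous.rpow_const ?_ (fun w => Or.inr (by positivity)))
      exact continuous_const.div (by fun_prop) (fun w => (hb0 w).ne')
    · have h1 := hb0 w
      rw [Real.norm_of_nonneg (by positivity), Real.norm_of_nonneg (by positivity)]
      have := hbn w
      have h2 : Real.pi / ‖b w‖ ≤ Real.pi / β := by gcongr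
      gcongr
  · rw [norm_mul]
    gcongr
    have hre : 0 < (b w).re := by rw [hbre]; exact hβ
    have := GaussianFourier.integral_cexp_neg_mul_sq_norm_add hre I x
    rw [this, norm_mul]
    have e1 : ‖((Real.pi : ℂ) / b w) ^ ((Module.finrank ℝ (EuclideanSpace ℝ (Fin d)) : ℂ) / 2)‖
        = (Real.pi / ‖b w‖) ^ ((d : ℝ) / 2) := by
      rw [finrank_euclideanSpace_fin]
      have : ((d : ℂ) / 2) = ((d / 2 : ℝ) : ℂ) := by push_cast; rfl
      rw [this, norm_cpow_real, norm_div, norm_real, Real.norm_of_nonneg Real.pi_pos.le]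
    rw [e1]
    refine mul_le_of_le_one_right (by positivity) ?_
    rw [Complex.norm_exp, Real.exp_le_one_iff]
    have : I ^ 2 * (‖x‖ : ℂ) ^ 2 / (4 * b w) = ((-(‖x‖ ^ 2 / 4) : ℝ) : ℂ) * (b w)⁻¹ := by
      rw [I_sq, div_eq_mul_inv, mul_inv]; push_cast; ring
    -- the Gaussian factor in `x` has modulus at most one since `Re (b w)⁻¹ ≥ 0`
    rw [this, re_ofReal_mul, inv_re]
    have : 0 ≤ (b w).re / normSq (b w) := div_nonneg hre.le (normSq_nonneg _)
    nlinarith [sq_nonneg ‖x‖]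

/-! ### Nonstationary phase -/

/-- Nonstationary phase for the quadratic phase `q u - η u²`, whose derivative `q - 2ηu` stays
above `1/2`: the integral decays like `t⁻ᴺ` for every `N`. The weights `(q - 2ηu)⁻ᵐ` make the class of
amplitudes stable under integration by parts, and the extra variable `θ ∈ [0, 1]` of the amplitude
makes the constant uniform over a compact family of amplitudes. -/
lemma nonstationary_bound (κ R : ℝ) (hκ : 0 ≤ κ) (hR : κ < R) (N : ℕ) :
    ∀ (A : ℝ × ℝ → ℂ), ContDiff ℝ (⊤ : ℕ∞) A → (∀ u θ, κ < |u| → A (u, θ) = 0) → ∀ m : ℕ,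
    ∃ C : ℝ, 0 ≤ C ∧ ∀ θ ∈ Set.Icc (0 : ℝ) 1, ∀ t q η : ℝ, 0 < t → |η| ≤ 1 →
      (∀ u ∈ Set.Icc (-R) R, 1 / 2 ≤ q - 2 * η * u) →
      ‖∫ u in (-R)..R, cexp (I * (t * (q * u - η * u ^ 2) : ℝ)) *
        (A (u, θ) * (((q - 2 * η * u)⁻¹ ^ m : ℝ) : ℂ))‖ ≤ C * t⁻¹ ^ N := by
  induction N with
  | zero =>
    intro A hA hA0 m
    obtain ⟨M, hM⟩ := (isCompact_Icc (a := -R) (b := R)).prod (isCompact_Icc (a := (0:ℝ)) (b := 1))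
      |>.exists_bound_of_continuousOn (f := A) hA.continuous.continuousOn
    refine ⟨(|M| * 2 ^ m) * |R - -R|, by positivity, ?_⟩
    intro θ hθ t q η ht hη hq
    rw [pow_zero, mul_one]
    refine intervalIntegral.norm_integral_le_of_norm_le_const ?_
    intro u hu
    rw [Set.uIoc_of_le (by linarith)] at hu
    have hu' : u ∈ Set.Icc (-R) R := Set.Ioc_subset_Icc_self hu
    have h1 := hq u hu'
    rw [norm_mul, norm_mul, mul_comm I, norm_exp_ofReal_mul_I, one_mul, norm_real, norm_pow,
      norm_inv, Real.norm_of_nonneg (by linarith)]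
    have h2 : (q - 2 * η * u)⁻¹ ≤ 2 := by
      rw [inv_le_comm₀ (by linarith) (by norm_num)]; linarith
    have h3 : 0 ≤ (q - 2 * η * u)⁻¹ := inv_nonneg.2 (by linarith)
    gcongr
    exact (hM (u, θ) ⟨hu', hθ⟩).trans (le_abs_self _)
  | succ N ih =>
    intro A hA hA0 m
    set A' : ℝ × ℝ → ℂ := fun z => fderiv ℝ A z (1, 0) with hA'
    have hA's : ContDiff ℝ (⊤ : ℕ∞) A' :=
      (hA.fderiv_right (m := (⊤ : ℕ∞)) (by simp)).clm_apply contDiff_const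
    have hder : ∀ u θ, HasDerivAt (fun u => A (u, θ)) (A' (u, θ)) u := by
      intro u θ
      have h1 : HasFDerivAt A (fderiv ℝ A (u, θ)) (u, θ) :=
        (hA.differentiable (by simp) _).hasFDerivAt
      exact h1.comp_hasDerivAt u ((hasDerivAt_id u).prodMk (hasDerivAt_const u θ))
    have hA'0 : ∀ u θ, κ < |u| → A' (u, θ) = 0 := by
      intro u θ hu
      have h1 : (fun u => A (u, θ)) =ᶠ[nhds u] fun _ => 0 := by
        have : ∀ᶠ v : ℝ in nhds u, κ < |v| := continuous_abs.continuousAt.eventually_const_lt hu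
        filter_upwards [this] with v hv using hA0 v θ hv
      exact (hder u θ).unique ((hasDerivAt_const u (0:ℂ)).congr_of_eventuallyEq h1)
    obtain ⟨C₁, hC₁, h₁⟩ := ih A' hA's hA'0 (m + 1)
    obtain ⟨C₂, hC₂, h₂⟩ := ih A hA hA0 (m + 2)
    refine ⟨C₁ + 2 * (m + 1) * C₂, by positivity, ?_⟩
    intro θ hθ t q η ht hη hq
    have hRR : -R ≤ R := by linarith
    have b₁ := h₁ θ hθ t q η ht hη hq
    have b₂ := h₂ θ hθ t q η ht hη hq
    set E : ℝ → ℂ := fun u => cexp (I * (t * (q * u - η * u ^ 2) : ℝ)) with hE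
    set J₁ := ∫ u in (-R)..R, E u * (A' (u, θ) * (((q - 2 * η * u)⁻¹ ^ (m + 1) : ℝ) : ℂ))
    set J₂ := ∫ u in (-R)..R, E u * (A (u, θ) * (((q - 2 * η * u)⁻¹ ^ (m + 2) : ℝ) : ℂ))
    have hEd : ∀ u, HasDerivAt E (I * t * (q - 2 * η * u : ℝ) * E u) u := by
      intro u
      have h1 : HasDerivAt (fun u : ℝ => t * (q * u - η * u ^ 2)) (t * (q - 2 * η * u)) u := by
        have := (((hasDerivAt_id u).const_mul q).sub ((hasDerivAt_pow 2 u).const_mul η)).const_mul t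
        refine this.congr_deriv ?_
        show t * (q * 1 - η * ((2 : ℕ) * u ^ 1)) = _
        push_cast; ring
      refine ((h1.ofReal_comp.const_mul I).cexp).congr_deriv ?_
      simp only [hE]; push_cast; ring
    have hne : ∀ u ∈ Set.uIcc (-R) R, q - 2 * η * u ≠ 0 := by
      intro u hu
      rw [Set.uIcc_of_le hRR] at hu
      have := hq u hu; linarith
    have hPd : ∀ k : ℕ, ∀ u ∈ Set.uIcc (-R) R, HasDerivAt
        (fun u : ℝ => (((q - 2 * η * u)⁻¹ ^ (k + 1) : ℝ) : ℂ))
        (((k + 1) * (2 * η) * (q - 2 * η * u)⁻¹ ^ (k + 2) : ℝ) : ℂ) u := by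
      intro k u hu
      have h0 : HasDerivAt (fun u : ℝ => q - 2 * η * u) (-(2 * η)) u := by
        simpa using ((hasDerivAt_id u).const_mul (2 * η)).const_sub q
      have h1 := (h0.inv (hne u hu)).pow (k + 1)
      refine (h1.congr_deriv ?_).ofReal_comp
      simp only [Nat.add_sub_cancel, Pi.inv_apply, neg_neg, div_eq_mul_inv, ← inv_pow]
      push_cast; ring
    set V : ℝ → ℂ := fun u => A (u, θ) * (((q - 2 * η * u)⁻¹ ^ (m + 1) : ℝ) : ℂ) with hV
    set V' : ℝ → ℂ := fun u => A' (u, θ) * (((q - 2 * η * u)⁻¹ ^ (m + 1) : ℝ) : ℂ) +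
      A (u, θ) * (((m + 1) * (2 * η) * (q - 2 * η * u)⁻¹ ^ (m + 2) : ℝ) : ℂ) with hV'
    have hVd : ∀ u ∈ Set.uIcc (-R) R, HasDerivAt V (V' u) u := fun u hu =>
      (hder u θ).mul (hPd m u hu)
    have hEc : Continuous E := by simp only [hE]; fun_prop
    have hA'c : Continuous A' := hA's.continuous
    have hAc : Continuous A := hA.continuous
    have hPc : ContinuousOn (fun u : ℝ => (q - 2 * η * u)⁻¹) (Set.uIcc (-R) R) :=
      ContinuousOn.inv₀ (by fun_prop) hne
    have hi : ∀ (B : ℝ × ℝ → ℂ) (k : ℕ), Continuous B → ContinuousOn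
        (fun u : ℝ => B (u, θ) * (((q - 2 * η * u)⁻¹ ^ k : ℝ) : ℂ)) (Set.uIcc (-R) R) := by
      intro B k hB
      exact ContinuousOn.mul (by fun_prop) (continuous_ofReal.comp_continuousOn (hPc.pow k))
    have hV'c : ContinuousOn V' (Set.uIcc (-R) R) := by
      refine (hi A' (m + 1) hA'c).add (ContinuousOn.mul (by fun_prop) ?_)
      exact continuous_ofReal.comp_continuousOn (continuousOn_const.mul (hPc.pow _))
    have hz : ∀ u, |u| = R → V u = 0 := by
      intro u hu
      simp [hV, hA0 u θ (by rw [hu]; exact hR)]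
    -- integration by parts moves the derivative off `E`; the boundary terms vanish because `R > κ`
    have parts := intervalIntegral.integral_mul_deriv_eq_deriv_mul (u := V) (u' := V') (v := E)
      (v' := fun u => I * t * (q - 2 * η * u : ℝ) * E u) (a := -R) (b := R) hVd
      (fun u _ => hEd u) hV'c.intervalIntegrable
      (Continuous.intervalIntegrable (by fun_prop) _ _)
    rw [hz R (abs_of_nonneg (by linarith)), hz (-R) (by rw [abs_neg, abs_of_nonneg (by linarith)])]
      at parts
    have hL : ∫ u in (-R)..R, V u * (I * t * (q - 2 * η * u : ℝ) * E u) = I * t *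
        ∫ u in (-R)..R, E u * (A (u, θ) * (((q - 2 * η * u)⁻¹ ^ m : ℝ) : ℂ)) := by
      rw [← intervalIntegral.integral_const_mul]
      refine intervalIntegral.integral_congr fun u hu => ?_
      have h1 : (((q - 2 * η * u)⁻¹ : ℝ) : ℂ) * ((q - 2 * η * u : ℝ) : ℂ) = 1 := by
        rw [← ofReal_mul, inv_mul_cancel₀ (hne u hu), ofReal_one]
      simp only [hV, ofReal_pow, pow_succ, ofReal_mul]
      linear_combination
        (A (u, θ) * (((q - 2 * η * u)⁻¹ : ℝ) : ℂ) ^ m * I * t * E u) * h1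
    have hRt : ∫ u in (-R)..R, V' u * E u = J₁ + ((m + 1) * (2 * η) : ℝ) * J₂ := by
      rw [← intervalIntegral.integral_const_mul, ← intervalIntegral.integral_add]
      · refine intervalIntegral.integral_congr fun u hu => ?_
        simp only [hV']; push_cast; ring
      · exact (hEc.continuousOn.mul (hi A' (m + 1) hA'c)).intervalIntegrable
      · exact (continuousOn_const.mul
          (hEc.continuousOn.mul (hi A (m + 2) hAc))).intervalIntegrable
    rw [hL, hRt] at parts
    have hn := congrArg norm parts
    rw [norm_mul, norm_mul, norm_I, one_mul, norm_real, Real.norm_of_nonneg ht.le] at hn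
    have hn2 : ‖0 * E R - 0 * E (-R) - (J₁ + ((m + 1) * (2 * η) : ℝ) * J₂)‖
        ≤ (C₁ + 2 * (m + 1) * C₂) * t⁻¹ ^ N := by
      rw [zero_mul, zero_mul, sub_zero, zero_sub, norm_neg]
      refine (norm_add_le _ _).trans ?_
      rw [norm_mul, norm_real, norm_mul, norm_mul,
        Real.norm_of_nonneg (by positivity : (0:ℝ) ≤ m + 1), Real.norm_eq_abs, Real.norm_eq_abs, abs_two]
      calc _ ≤ C₁ * t⁻¹ ^ N + (m + 1) * (2 * 1) * (C₂ * t⁻¹ ^ N) := by gcongr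
        _ = _ := by ring
    rw [← hn] at hn2
    rw [pow_succ, ← mul_assoc, le_mul_inv_iff₀ ht, mul_comm]
    exact hn2

/-! ### The radial profile -/

/-- The function `h` of `y = |ξ|²` determined by
`e^{it|ξ|} ζ(|ξ| - l) = e^{-(l⁻² - i t/(2l)) |ξ|²} h(|ξ|²)`. The subtracted phase `t y / (2l)` is the
linearization of `t √y` at the centre `y = l²` of the annulus, up to a constant, so `h` oscillates
slowly. For `y < 0` the convention `√y = 0` gives the value `0` whenever `ζ(-l) = 0`. -/
noncomputable def radialProfile (ζ : ℝ → ℝ) (t l y : ℝ) : ℂ :=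
  cexp (I * (t * √y - t / (2 * l) * y : ℝ)) * ((Real.exp (y / l ^ 2) * ζ (√y - l) : ℝ) : ℂ)

section profile
variable {ζ : ℝ → ℝ} {κ t l : ℝ}

lemma radialProfile_eq_zero (hζ0 : ∀ s : ℝ, κ < |s| → ζ s = 0) {y : ℝ}
    (hy : κ < |√y - l|) : radialProfile ζ t l y = 0 := by
  simp [radialProfile, hζ0 _ hy]

lemma deriv_radialProfile_eq_zero (hζ0 : ∀ s : ℝ, κ < |s| → ζ s = 0) {y : ℝ}
    (hy : κ < |√y - l|) : deriv (radialProfile ζ t l) y = 0 := by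
  have h1 : radialProfile ζ t l =ᶠ[nhds y] fun _ => 0 := by
    have : ContinuousAt (fun y : ℝ => |√y - l|) y := by fun_prop
    filter_upwards [this.eventually_const_lt hy] with z hz
    exact radialProfile_eq_zero hζ0 hz
  rw [h1.deriv_eq, deriv_const]

lemma mem_Icc_of_abs_sqrt_sub_le (hκ : 0 ≤ κ) (hl : κ + 1 ≤ l) {y : ℝ} (hy : |√y - l| ≤ κ) :
    y ∈ Set.Icc ((l - κ) ^ 2) ((l + κ) ^ 2) := by
  rw [abs_le] at hy
  have h0 : 0 < √y := by linarith
  have hy0 : 0 ≤ y := (Real.sqrt_pos.1 h0).le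
  have := Real.sq_sqrt hy0
  constructor <;> nlinarith

lemma contDiff_radialProfile (hζ : ContDiff ℝ (⊤ : ℕ∞) ζ)
    (hζ0 : ∀ s : ℝ, κ < |s| → ζ s = 0) (hl : κ + 1 ≤ l) :
    ContDiff ℝ (⊤ : ℕ∞) (radialProfile ζ t l) := by
  rw [contDiff_iff_contDiffAt]
  intro y
  rcases lt_or_ge 0 y with hy | hy
  · have hs : ContDiffAt ℝ (⊤ : ℕ∞) (fun y : ℝ => √y) y := contDiffAt_id.sqrt hy.ne'
    unfold radialProfile
    have h1 : ContDiffAt ℝ (⊤ : ℕ∞) (fun y : ℝ => t * √y - t / (2 * l) * y) y :=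
      (contDiffAt_const.mul hs).sub (contDiffAt_const.mul contDiffAt_id)
    have h2 : ContDiffAt ℝ (⊤ : ℕ∞) (fun y : ℝ => Real.exp (y / l ^ 2) * ζ (√y - l)) y :=
      (contDiffAt_id.div_const _).exp.mul (hζ.contDiffAt.comp y (hs.sub contDiffAt_const))
    exact (contDiffAt_const.mul (ofRealCLM.contDiff.contDiffAt.comp y h1)).cexp.mul
      (ofRealCLM.contDiff.contDiffAt.comp y h2)
  · have h1 : radialProfile ζ t l =ᶠ[nhds y] fun _ => 0 := by
      filter_upwards [Iio_mem_nhds (show y < 1 by linarith)] with z hz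
      apply radialProfile_eq_zero hζ0
      have : √z < 1 := by rw [Real.sqrt_lt' one_pos]; simpa using hz
      rw [lt_abs]; right; linarith
    exact contDiffAt_const.congr_of_eventuallyEq h1

lemma hasCompactSupport_radialProfile (hκ : 0 ≤ κ)
    (hζ0 : ∀ s : ℝ, κ < |s| → ζ s = 0) (hl : κ + 1 ≤ l) :
    HasCompactSupport (radialProfile ζ t l) := by
  refine HasCompactSupport.intro (K := Set.Icc ((l - κ) ^ 2) ((l + κ) ^ 2)) isCompact_Icc ?_
  intro y hy
  apply radialProfile_eq_zero hζ0
  by_contra! h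
  exact hy (mem_Icc_of_abs_sqrt_sub_le hκ hl h)

lemma exp_div_sq_le (hκ : 0 ≤ κ) (hl : κ + 1 ≤ l) {y : ℝ} (hy : |√y - l| ≤ κ) :
    Real.exp (y / l ^ 2) ≤ Real.exp 4 := by
  have h1 := (mem_Icc_of_abs_sqrt_sub_le hκ hl hy).2
  apply Real.exp_le_exp.2
  rw [div_le_iff₀ (by nlinarith)]
  nlinarith

lemma norm_radialProfile_le (hκ : 0 ≤ κ) (hζ0 : ∀ s : ℝ, κ < |s| → ζ s = 0) (hl : κ + 1 ≤ l)
    {M : ℝ} (hM : ∀ s, |ζ s| ≤ M) (y : ℝ) : ‖radialProfile ζ t l y‖ ≤ Real.exp 4 * M := by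
  have hM0 : 0 ≤ M := (abs_nonneg _).trans (hM 0)
  rcases lt_or_ge κ |√y - l| with h | h
  · rw [radialProfile_eq_zero hζ0 h, norm_zero]; positivity
  · rw [radialProfile, norm_mul, mul_comm I, norm_exp_ofReal_mul_I, one_mul, norm_real, norm_mul,
      Real.norm_of_nonneg (Real.exp_pos _).le, Real.norm_eq_abs]
    exact mul_le_mul (exp_div_sq_le hκ hl h) (hM _) (abs_nonneg _) (Real.exp_pos _).le

/-- The linearized phase has derivative `t/(2√y) - t/(2l) = O(t/l²)` on the support, while
differentiating the amplitude costs `O(1/l)`, which is also `O(t/l²)` because `t ≥ c l`. -/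
lemma norm_deriv_radialProfile_le (hζ : ContDiff ℝ (⊤ : ℕ∞) ζ) (hκ : 0 ≤ κ)
    (hζ0 : ∀ s : ℝ, κ < |s| → ζ s = 0)
    (hl : κ + 1 ≤ l) {c : ℝ} (hc : 0 < c) (ht : c * l ≤ t) {M : ℝ} (hM : ∀ s, |ζ s| ≤ M)
    (hM' : ∀ s, |deriv ζ s| ≤ M) (y : ℝ) :
    ‖deriv (radialProfile ζ t l) y‖
      ≤ Real.exp 4 * M * (κ * (κ + 1) / 2 + (1 + (κ + 1) / 2) / c) * (t / l ^ 2) := by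
  have hM0 : 0 ≤ M := (abs_nonneg _).trans (hM 0)
  have hl1 : 1 ≤ l := by linarith
  have hl0 : 0 < l := by linarith
  have ht0 : 0 < t := lt_of_lt_of_le (by positivity) ht
  rcases lt_or_ge κ |√y - l| with h | h
  · rw [deriv_radialProfile_eq_zero hζ0 h, norm_zero]
    positivity
  · have hr := abs_le.1 h
    have hr0 : 0 < √y := by linarith
    have hy0 : 0 < y := Real.sqrt_pos.1 hr0
    have hrl : l ≤ (κ + 1) * √y := by nlinarith
    have hs : HasDerivAt (fun y : ℝ => √y) (1 / (2 * √y)) y := Real.hasDerivAt_sqrt hy0.ne'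
    have h1 : HasDerivAt (fun y : ℝ => t * √y - t / (2 * l) * y)
        (t * (1 / (2 * √y)) - t / (2 * l) * 1) y :=
      (hs.const_mul t).sub ((hasDerivAt_id y).const_mul _)
    have h2 : HasDerivAt (fun y : ℝ => Real.exp (y / l ^ 2) * ζ (√y - l))
        (Real.exp (y / l ^ 2) * (1 / l ^ 2) * ζ (√y - l) +
          Real.exp (y / l ^ 2) * (deriv ζ (√y - l) * (1 / (2 * √y)))) y := by
      refine ((hasDerivAt_id y).div_const _).exp.mul ?_
      have := ((hζ.differentiable (by simp)) (√y - l)).hasDerivAt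
      exact this.comp y (hs.sub_const l)
    have h3 := ((h1.ofReal_comp.const_mul I).cexp).mul h2.ofReal_comp
    have h4 : deriv (radialProfile ζ t l) y = _ := h3.deriv
    rw [h4]
    have hE := exp_div_sq_le hκ hl h
    have hE0 := Real.exp_pos (y / l ^ 2)
    have hmu : 1 / l ≤ t / l ^ 2 / c := by
      rw [div_div, div_le_div_iff₀ hl0 (by positivity)]; nlinarith
    have hsq : 1 / (2 * √y) ≤ (κ + 1) / 2 * (1 / l) := by
      rw [div_mul_div_comm, div_le_div_iff₀ (by positivity) (by positivity)]; nlinarith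
    have hll : 1 / l ^ 2 ≤ 1 / l := by
      apply one_div_le_one_div_of_le hl0; nlinarith
    have hph : |t * (1 / (2 * √y)) - t / (2 * l) * 1| ≤ κ * (κ + 1) / 2 * (t / l ^ 2) := by
      have : t * (1 / (2 * √y)) - t / (2 * l) * 1 = t / l * (1 / (2 * √y)) * (-(√y - l)) := by
        field_simp; ring
      rw [this, abs_mul, abs_neg, abs_of_pos (by positivity)]
      calc t / l * (1 / (2 * √y)) * |√y - l| ≤ t / l * ((κ + 1) / 2 * (1 / l)) * κ := by gcongr
        _ = _ := by field_simp
    have hA2 : |Real.exp (y / l ^ 2) * (1 / l ^ 2) * ζ (√y - l) +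
          Real.exp (y / l ^ 2) * (deriv ζ (√y - l) * (1 / (2 * √y)))|
        ≤ Real.exp 4 * M * ((1 + (κ + 1) / 2) / c) * (t / l ^ 2) := by
      refine (abs_add_le _ _).trans ?_
      rw [abs_mul, abs_mul, abs_mul, abs_mul, abs_of_pos hE0, abs_of_pos (by positivity),
        abs_of_pos (by positivity : 0 < 1 / (2 * √y))]
      calc _ ≤ Real.exp 4 * (t / l ^ 2 / c) * M
            + Real.exp 4 * (M * ((κ + 1) / 2 * (t / l ^ 2 / c))) := by
            have := hM (√y - l)
            have := hM' (√y - l)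
            have h6 : 1 / l ^ 2 ≤ t / l ^ 2 / c := hll.trans hmu
            have h7 : 1 / (2 * √y) ≤ (κ + 1) / 2 * (t / l ^ 2 / c) := hsq.trans (by gcongr)
            gcongr
        _ = _ := by field_simp
    have hA1 : |Real.exp (y / l ^ 2) * ζ (√y - l)| ≤ Real.exp 4 * M := by
      rw [abs_mul, abs_of_pos hE0]
      exact mul_le_mul hE (hM _) (abs_nonneg _) (Real.exp_pos _).le
    refine (norm_add_le _ _).trans ?_
    simp only [norm_mul, mul_comm I, norm_exp_ofReal_mul_I, norm_I, norm_real, Real.norm_eq_abs,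
      one_mul, mul_one] at hA1 hA2 hph ⊢
    rw [abs_mul] at hA1
    calc _ ≤ κ * (κ + 1) / 2 * (t / l ^ 2) * (Real.exp 4 * M) +
          Real.exp 4 * M * ((1 + (κ + 1) / 2) / c) * (t / l ^ 2) :=
          add_le_add (mul_le_mul hph hA1 (by positivity) (by positivity)) hA2
      _ = _ := by ring

lemma integral_norm_sq_le {f : ℝ → ℂ} {a b B : ℝ} (hab : a ≤ b)
    (hf : ∀ y, y ∉ Set.Icc a b → f y = 0) (hB : ∀ y, ‖f y‖ ≤ B) :
    ∫ y, ‖f y‖ ^ 2 ≤ B ^ 2 * (b - a) := by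
  have h1 : ∫ y, ‖f y‖ ^ 2 = ∫ y in Set.Icc a b, ‖f y‖ ^ 2 := by
    refine (setIntegral_eq_integral_of_forall_compl_eq_zero fun y hy => ?_).symm
    rw [hf y hy]; simp
  rw [h1]
  have h2 := norm_setIntegral_le_of_norm_le_const (μ := volume) (s := Set.Icc a b)
    (f := fun y => ‖f y‖ ^ 2) (C := B ^ 2) (by simp) (fun y _ => by
      rw [norm_pow, norm_norm]; exact pow_le_pow_left₀ (norm_nonneg _) (hB y) 2)
  have h3 : volume.real (Set.Icc a b) = b - a := by simp [Measure.real, hab]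
  rw [h3] at h2
  exact (le_abs_self _).trans h2

end profile

/-! ### Fourier transform of the radial profile -/

/-- Rapid decay of `ĥ(w)` at frequencies `w` for which the total quadratic coefficient
`s = t/(2l) + 2πw` is small. After the substitution `y = (l + u)²` the phase is
`t (l + u) - s (l + u)²`, whose `u`-derivative is at least `t/2` when `|s| ≤ t/(8l)`. -/
lemma norm_fourier_radialProfile_le {ζ : ℝ → ℝ} {κ : ℝ} (hζ : ContDiff ℝ (⊤ : ℕ∞) ζ)
    (hκ : 1 ≤ κ) (hζ0 : ∀ s : ℝ, κ < |s| → ζ s = 0) (N : ℕ) :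
    ∃ C : ℝ, 0 ≤ C ∧ ∀ l t w : ℝ, κ + 1 ≤ l → 0 < t →
      |t / (2 * l) + 2 * Real.pi * w| ≤ t / (8 * l) →
      ‖𝓕 (radialProfile ζ t l) w‖ ≤ C * l * t⁻¹ ^ N := by
  -- the amplitude after the substitution, with `θ = 1/l` as a parameter and a factor `l` removed
  set A : ℝ × ℝ → ℂ := fun z =>
    ((2 * (1 + z.1 * z.2) * Real.exp ((1 + z.1 * z.2) ^ 2) * ζ z.1 : ℝ) : ℂ) with hA
  have hAs : ContDiff ℝ (⊤ : ℕ∞) A := by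
    have h1 : ContDiff ℝ (⊤ : ℕ∞) fun z : ℝ × ℝ =>
        2 * (1 + z.1 * z.2) * Real.exp ((1 + z.1 * z.2) ^ 2) * ζ z.1 := by fun_prop
    exact ofRealCLM.contDiff.comp h1
  have hA0 : ∀ u θ, κ < |u| → A (u, θ) = 0 := by
    intro u θ hu; simp [hA, hζ0 u hu]
  obtain ⟨C, hC, hb⟩ := nonstationary_bound κ (κ + 1 / 2) (by linarith) (by linarith) N A hAs hA0 0
  refine ⟨C, hC, ?_⟩
  intro l t w hl ht hs
  have hl0 : 0 < l := by linarith
  set R := κ + 1 / 2 with hR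
  set s := t / (2 * l) + 2 * Real.pi * w with hsdef
  set η := s / t with hη
  have hst : s = η * t := by rw [hη]; field_simp
  have hη8 : |η| ≤ 1 / (8 * l) := by
    rw [hη, abs_div, abs_of_pos ht, div_le_iff₀ ht]
    calc _ ≤ _ := hs
      _ = _ := by ring
  have hηl : |η| * l ≤ 1 / 8 := by
    calc |η| * l ≤ 1 / (8 * l) * l := by gcongr
      _ = 1 / 8 := by field_simp
  have hη1 : |η| ≤ 1 := by nlinarith [abs_nonneg η]
  have hq : ∀ u ∈ Set.Icc (-R) R, 1 / 2 ≤ (1 - 2 * η * l) - 2 * η * u := by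
    intro u hu
    have h1 : |η * (l + u)| ≤ |η| * (2 * l) := by
      rw [abs_mul]
      gcongr
      rw [abs_le]; constructor <;> linarith [hu.1, hu.2]
    have h2 := (abs_le.1 h1).2
    nlinarith
  have hθ : 1 / l ∈ Set.Icc (0 : ℝ) 1 := ⟨by positivity, by rw [div_le_one hl0]; linarith⟩
  have hbd := hb (1 / l) hθ t (1 - 2 * η * l) η ht hη1 hq
  set g : ℝ → ℂ := fun y => cexp ((-2 * Real.pi * y * w : ℝ) * I) • radialProfile ζ t l y with hg
  have hgc : Continuous g := by
    have := (contDiff_radialProfile (t := t) hζ hζ0 hl).continuous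
    simp only [hg]; fun_prop
  have e1 : 𝓕 (radialProfile ζ t l) w = ∫ y, g y := Real.fourier_real_eq_integral_exp_smul _ w
  have e2 : ∫ y, g y = ∫ y in (l + -R) ^ 2..(l + R) ^ 2, g y := by
    refine (intervalIntegral.integral_eq_integral_of_support_subset ?_).symm
    intro y hy
    have h1 : radialProfile ζ t l y ≠ 0 := by
      intro h; apply hy; simp [hg, h]
    have h2 : |√y - l| ≤ κ := by
      by_contra! h; exact h1 (radialProfile_eq_zero hζ0 h)
    have h3 := mem_Icc_of_abs_sqrt_sub_le (by linarith) hl h2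
    constructor <;> nlinarith [h3.1, h3.2]
  have e3 : ∫ u in (-R)..R, (2 * (l + u)) • (g ∘ fun u => (l + u) ^ 2) u
      = ∫ y in (l + -R) ^ 2..(l + R) ^ 2, g y := by
    refine intervalIntegral.integral_deriv_smul_comp' (f := fun u => (l + u) ^ 2)
      (f' := fun u => 2 * (l + u)) (g := g) ?_ (by fun_prop) hgc.continuousOn
    intro u _
    have := ((hasDerivAt_id u).const_add l).pow 2
    refine this.congr_deriv ?_
    simp
  have e4 : ∫ u in (-R)..R, (2 * (l + u)) • (g ∘ fun u => (l + u) ^ 2) u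
      = (cexp ((t * l - s * l ^ 2 : ℝ) * I) * l) *
        ∫ u in (-R)..R, cexp (I * (t * ((1 - 2 * η * l) * u - η * u ^ 2) : ℝ)) *
        (A (u, 1 / l) * ((((1 - 2 * η * l) - 2 * η * u)⁻¹ ^ 0 : ℝ) : ℂ)) := by
    rw [← intervalIntegral.integral_const_mul]
    refine intervalIntegral.integral_congr fun u hu => ?_
    rw [Set.uIcc_of_le (by linarith)] at hu
    have hsq : √((l + u) ^ 2) = l + u := Real.sqrt_sq (by linarith [hu.1])
    simp only [Function.comp, hg, radialProfile, hsq, hA, add_sub_cancel_left, pow_zero,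
      ofReal_one, mul_one, smul_eq_mul, real_smul]
    have x1 : (l + u) ^ 2 / l ^ 2 = (1 + u * (1 / l)) ^ 2 := by field_simp
    have x2 : cexp ((-2 * Real.pi * (l + u) ^ 2 * w : ℝ) * I) *
        cexp (I * (t * (l + u) - t / (2 * l) * (l + u) ^ 2 : ℝ)) =
        cexp ((t * l - s * l ^ 2 : ℝ) * I) *
          cexp (I * (t * ((1 - 2 * η * l) * u - η * u ^ 2) : ℝ)) := by
      rw [← Complex.exp_add, ← Complex.exp_add]
      congr 1
      have : (-2 * Real.pi * (l + u) ^ 2 * w) + (t * (l + u) - t / (2 * l) * (l + u) ^ 2)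
          = (t * l - s * l ^ 2) + t * ((1 - 2 * η * l) * u - η * u ^ 2) := by
        have h1 : -2 * Real.pi * (l + u) ^ 2 * w - t / (2 * l) * (l + u) ^ 2
          = - s * (l + u) ^ 2 := by rw [hsdef]; ring
        calc _ = t * (l + u) + (-2 * Real.pi * (l + u) ^ 2 * w - t / (2 * l) * (l + u) ^ 2) := by
              ring
          _ = _ := by rw [h1, hst]; ring
      have h2 := congrArg (fun r : ℝ => (r : ℂ) * I) this
      simp only [ofReal_add, add_mul] at h2
      rw [mul_comm I, mul_comm I]
      exact_mod_cast h2
    have x3 : (((2 * (l + u) : ℝ)) : ℂ) = (l : ℂ) * ((2 * (1 + u * (1 / l)) : ℝ) : ℂ) := by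
      rw [← ofReal_mul]; congr 1; field_simp
    rw [x1, x3]
    rw [← mul_assoc (cexp _) (cexp _), x2]
    push_cast
    ring
  rw [e1, e2, ← e3, e4, norm_mul, norm_mul, norm_exp_ofReal_mul_I, one_mul, norm_real,
    Real.norm_of_nonneg hl0.le]
  calc _ ≤ l * (C * t⁻¹ ^ N) := by gcongr
    _ = _ := by ring

lemma exists_bound_cutoff {ζ : ℝ → ℝ} {κ : ℝ} (hζ : ContDiff ℝ (⊤ : ℕ∞) ζ)
    (hζ0 : ∀ s : ℝ, κ < |s| → ζ s = 0) :
    ∃ M : ℝ, (∀ s, |ζ s| ≤ M) ∧ ∀ s, |deriv ζ s| ≤ M := by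
  have hcs : HasCompactSupport ζ := by
    refine HasCompactSupport.intro (K := Set.Icc (-κ) κ) isCompact_Icc fun s hs => hζ0 s ?_
    by_contra! h
    exact hs (abs_le.1 h)
  obtain ⟨M₁, h₁⟩ := hcs.exists_bound_of_continuous hζ.continuous
  obtain ⟨M₂, h₂⟩ := hcs.deriv.exists_bound_of_continuous (hζ.continuous_deriv (by simp))
  exact ⟨max M₁ M₂, fun s => (h₁ s).trans (le_max_left _ _),
    fun s => (h₂ s).trans (le_max_right _ _)⟩

/-- The `L¹` norm of `ĥ` is `O(√μ)` with `μ = t/l`. -/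
lemma integral_norm_fourier_radialProfile_le {ζ : ℝ → ℝ} {κ c : ℝ} (hc : 0 < c)
    (hζ : ContDiff ℝ (⊤ : ℕ∞) ζ) (hκ : 1 ≤ κ) (hζ0 : ∀ s : ℝ, κ < |s| → ζ s = 0) :
    ∃ D : ℝ, 0 ≤ D ∧ ∀ l t : ℝ, κ + 1 ≤ l → c * l ≤ t → ∀ h : 𝓢(ℝ, ℂ),
      (h : ℝ → ℂ) = radialProfile ζ t l → ∫ w, ‖𝓕 h w‖ ≤ D * √(t / l) := by
  obtain ⟨M, hM, hM'⟩ := exists_bound_cutoff hζ hζ0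
  set B₁ := Real.exp 4 * M
  set B₂ := Real.exp 4 * M * (κ * (κ + 1) / 2 + (1 + (κ + 1) / 2) / c)
  refine ⟨(Real.pi + 4 * κ * (B₁ ^ 2 + B₂ ^ 2)) / 2, by positivity, ?_⟩
  intro l t hl ht h hh
  have hκ0 : 0 ≤ κ := by linarith
  have hl0 : 0 < l := by linarith
  have ht0 : 0 < t := lt_of_lt_of_le (by positivity) ht
  have hab : (l - κ) ^ 2 ≤ (l + κ) ^ 2 := by nlinarith
  have hnot : ∀ y, y ∉ Set.Icc ((l - κ) ^ 2) ((l + κ) ^ 2) → κ < |√y - l| := by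
    intro y hy
    by_contra! h
    exact hy (mem_Icc_of_abs_sqrt_sub_le hκ0 hl h)
  have i₁ : ∫ y, ‖h y‖ ^ 2 ≤ B₁ ^ 2 * ((l + κ) ^ 2 - (l - κ) ^ 2) := by
    rw [hh]
    exact integral_norm_sq_le hab (fun y hy => radialProfile_eq_zero hζ0 (hnot y hy))
      (norm_radialProfile_le hκ0 hζ0 hl hM)
  have i₂ : ∫ y, ‖deriv h y‖ ^ 2 ≤ (B₂ * (t / l ^ 2)) ^ 2 * ((l + κ) ^ 2 - (l - κ) ^ 2) := by
    rw [hh]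
    exact integral_norm_sq_le hab (fun y hy => deriv_radialProfile_eq_zero hζ0 (hnot y hy))
      (norm_deriv_radialProfile_le hζ hκ0 hζ0 hl hc ht hM hM')
  set μ := t / l with hμ
  have hμ0 : 0 < μ := by positivity
  have hs0 : 0 < √μ := Real.sqrt_pos.2 hμ0
  have hs2 : √μ ^ 2 = μ := Real.sq_sqrt hμ0.le
  have htl : t / l ^ 2 = μ / l := by rw [hμ]; field_simp
  rw [htl] at i₂
  -- `a = μ/l` is the size of the frequencies of `h`; `ε = l/√μ` balances the two resulting terms
  have := integral_norm_fourier_le_s2 h (a := μ / l) (ε := l / √μ) (by positivity) (by positivity)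
  refine this.trans ?_
  calc (l / √μ * (μ / l * Real.pi) +
      (l / √μ)⁻¹ * ((∫ y, ‖h y‖ ^ 2) + ((μ / l) ^ 2)⁻¹ * ∫ y, ‖deriv h y‖ ^ 2)) / 2
      ≤ (l / √μ * (μ / l * Real.pi) +
      (l / √μ)⁻¹ * (B₁ ^ 2 * ((l + κ) ^ 2 - (l - κ) ^ 2) + ((μ / l) ^ 2)⁻¹ *
        ((B₂ * (μ / l)) ^ 2 * ((l + κ) ^ 2 - (l - κ) ^ 2)))) / 2 := by gcongr
    _ = (Real.pi + 4 * κ * (B₁ ^ 2 + B₂ ^ 2)) / 2 * √μ := by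
      rw [← hs2]
      have : √(√μ ^ 2) = √μ := by rw [hs2]
      rw [this]
      field_simp
      ring

/-! ### The kernel bound -/

/-- Klainerman–Tataru-type kernel bound: the half-wave kernel with symbol localized to the
annulus `{λ − κ ≤ |ξ| ≤ λ + κ}` satisfies `sup_x |K_{κ,λ}(t,x)| ≤ C (t/λ)^{−(d−1)/2}`
for all `λ ∈ ℕ` with `λ ≥ κ + 1` and all `t ≥ cλ`. -/
theorem halfwave_kernel_annulus_decay (d : ℕ) (hd : 2 ≤ d) (c κ : ℝ) (hc : 0 < c) (hκ : 1 ≤ κ)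
    (ζt : ℝ → ℝ) (hζ_smooth : ContDiff ℝ (⊤ : ℕ∞) ζt) (hζ_nonneg : ∀ s, 0 ≤ ζt s)
    (hζ_one : ∀ s : ℝ, |s| ≤ 3 / 4 * κ → ζt s = 1)
    (hζ_zero : ∀ s : ℝ, κ < |s| → ζt s = 0) :
    ∃ C > 0, ∀ lam : ℕ, κ + 1 ≤ (lam : ℝ) → ∀ t : ℝ, c * lam ≤ t →
      ∀ x : EuclideanSpace ℝ (Fin d),
        ‖∫ ξ : EuclideanSpace ℝ (Fin d),
            Complex.exp (Complex.I * ((t * ‖ξ‖ + ⟪x, ξ⟫ : ℝ) : ℂ)) * ((ζt (‖ξ‖ - lam) : ℝ) : ℂ)‖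
          ≤ C * (t / lam) ^ (-((d : ℝ) - 1) / 2) := by
  obtain ⟨D, hD, hL1⟩ := integral_norm_fourier_radialProfile_le hc hζ_smooth hκ hζ_zero
  -- decay of order `d + 1` compensates the trivial Gaussian weight `(π l²)^{d/2}` on `S` below
  obtain ⟨C₃, hC₃, hpt⟩ := norm_fourier_radialProfile_le hζ_smooth hκ hζ_zero (d + 1)
  have hπ := Real.pi_pos
  refine ⟨(8 * Real.pi) ^ ((d : ℝ) / 2) * D +
    C₃ * Real.pi ^ ((d : ℝ) / 2) * c ^ (-((d : ℝ) + 1) / 2) + 1, by positivity, ?_⟩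
  intro lam hlam t ht x
  set l : ℝ := (lam : ℝ)
  have hκ0 : 0 ≤ κ := by linarith
  have hl0 : 0 < l := by linarith
  have ht0 : 0 < t := lt_of_lt_of_le (by positivity) ht
  set h : 𝓢(ℝ, ℂ) := (hasCompactSupport_radialProfile (t := t) hκ0 hζ_zero hlam).toSchwartzMap
    (contDiff_radialProfile hζ_smooth hζ_zero hlam)
  have hh : (h : ℝ → ℂ) = radialProfile ζt t l := rfl
  have hI : ∀ ξ : EuclideanSpace ℝ (Fin d),
      cexp (I * ((t * ‖ξ‖ + ⟪x, ξ⟫ : ℝ) : ℂ)) * ((ζt (‖ξ‖ - l) : ℝ) : ℂ) =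
      cexp (-((((l ^ 2)⁻¹ : ℝ) : ℂ) - ((t / (2 * l) : ℝ) : ℂ) * I) * (‖ξ‖ : ℂ) ^ 2
        + I * (⟪x, ξ⟫ : ℝ)) * h (‖ξ‖ ^ 2) := by
    intro ξ
    rw [hh, radialProfile, Real.sqrt_sq (norm_nonneg _), ofReal_mul (Real.exp _), ofReal_exp,
      ← mul_assoc, ← mul_assoc, ← Complex.exp_add, ← Complex.exp_add]
    congr 2
    push_cast
    ring
  simp_rw [hI]
  refine (norm_integral_subordination_le d h (by positivity) _ x).trans ?_
  set μ := t / l with hμ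
  have hμ0 : 0 < μ := by positivity
  have hcμ : c ≤ μ := by rw [hμ, le_div_iff₀ hl0]; exact ht
  -- `S` is the set of `w` with `|t/(2l) + 2πw| ≤ μ/8`, where the Gaussian bound is poor
  set S := Set.Icc ((-(μ / 8) - μ / 2) / (2 * Real.pi)) ((μ / 8 - μ / 2) / (2 * Real.pi)) with hS
  set Q := C₃ * l * t⁻¹ ^ (d + 1) * (Real.pi * l ^ 2) ^ ((d : ℝ) / 2) with hQ
  have hQ0 : 0 ≤ Q := by positivity
  have hSi : Integrable (S.indicator fun _ : ℝ => Q) :=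
    (integrable_indicator_iff measurableSet_Icc).2 (integrableOn_const (by simp))
  have hptw : ∀ w, ‖𝓕 h w‖ * (Real.pi / ‖(((l ^ 2)⁻¹ : ℝ) : ℂ) -
        (t / (2 * l) + 2 * Real.pi * w : ℝ) * I‖) ^ ((d : ℝ) / 2)
      ≤ (8 * Real.pi / μ) ^ ((d : ℝ) / 2) * ‖𝓕 h w‖ + S.indicator (fun _ => Q) w := by
    intro w
    have hω : t / (2 * l) = μ / 2 := by rw [hμ]; field_simp
    set b : ℂ := (((l ^ 2)⁻¹ : ℝ) : ℂ) - (t / (2 * l) + 2 * Real.pi * w : ℝ) * I with hb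
    have hre : (l ^ 2)⁻¹ ≤ ‖b‖ := by
      have : b.re = (l ^ 2)⁻¹ := by
        rw [hb, sub_re, ofReal_re, mul_I_re, ofReal_im, neg_zero, sub_zero]
      rw [← this]; exact (le_abs_self _).trans (abs_re_le_norm _)
    have him : |t / (2 * l) + 2 * Real.pi * w| ≤ ‖b‖ := by
      have : b.im = -(t / (2 * l) + 2 * Real.pi * w) := by
        rw [hb, sub_im, ofReal_im, mul_I_im, ofReal_re, zero_sub]
      rw [← abs_neg, ← this]; exact abs_im_le_norm _
    have hb0 : 0 < ‖b‖ := lt_of_lt_of_le (by positivity) hre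
    by_cases hw : |t / (2 * l) + 2 * Real.pi * w| ≤ μ / 8
    · have hwS : w ∈ S := by
        rw [hω, abs_le] at hw
        rw [hS, Set.mem_Icc, div_le_iff₀ (by positivity), le_div_iff₀ (by positivity)]
        constructor <;> linarith [hw.1, hw.2]
      rw [Set.indicator_of_mem hwS]
      have h1 : ‖𝓕 h w‖ ≤ C₃ * l * t⁻¹ ^ (d + 1) := by
        rw [SchwartzMap.fourier_coe, hh]
        refine hpt l t w hlam ht0 (hw.trans (le_of_eq ?_))
        rw [hμ]; field_simp
      have h2 : Real.pi / ‖b‖ ≤ Real.pi * l ^ 2 := by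
        rw [div_eq_mul_inv]
        have := inv_anti₀ (by positivity) hre
        rw [inv_inv] at this
        gcongr
      have h3 : ‖𝓕 h w‖ * (Real.pi / ‖b‖) ^ ((d : ℝ) / 2) ≤ Q := by
        rw [hQ]; gcongr
      have h4 : 0 ≤ (8 * Real.pi / μ) ^ ((d : ℝ) / 2) * ‖𝓕 h w‖ := by positivity
      linarith
    · push Not at hw
      have h0 : 0 ≤ S.indicator (fun _ => Q) w := Set.indicator_nonneg (fun _ _ => hQ0) w
      have h2 : Real.pi / ‖b‖ ≤ 8 * Real.pi / μ := by
        rw [div_le_div_iff₀ hb0 hμ0]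
        nlinarith
      have h3 : ‖𝓕 h w‖ * (Real.pi / ‖b‖) ^ ((d : ℝ) / 2)
          ≤ (8 * Real.pi / μ) ^ ((d : ℝ) / 2) * ‖𝓕 h w‖ := by
        rw [mul_comm]; gcongr
      linarith
  have hFi : Integrable fun w => (8 * Real.pi / μ) ^ ((d : ℝ) / 2) * ‖𝓕 h w‖ :=
    ((𝓕 h).integrable (μ := volume)).norm.const_mul _
  refine (integral_mono_of_nonneg (Filter.Eventually.of_forall fun w => by positivity)
    (hFi.add hSi) (Filter.Eventually.of_forall hptw)).trans ?_
  have hSint : ∫ w, S.indicator (fun _ => Q) w = μ / (8 * Real.pi) * Q := by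
    rw [integral_indicator measurableSet_Icc, setIntegral_const, smul_eq_mul, Measure.real,
      Real.volume_Icc, ENNReal.toReal_ofReal]
    · congr 1; field_simp; ring
    · rw [← sub_div]; apply div_nonneg <;> linarith
  simp only [Pi.add_apply]
  rw [integral_add hFi hSi, integral_const_mul, hSint]
  have hf1 : (8 * Real.pi / μ) ^ ((d : ℝ) / 2) * ∫ w, ‖𝓕 h w‖
      ≤ (8 * Real.pi) ^ ((d : ℝ) / 2) * D * μ ^ (-((d : ℝ) - 1) / 2) := by
    have h1 := hL1 l t hlam ht h hh
    calc _ ≤ (8 * Real.pi / μ) ^ ((d : ℝ) / 2) * (D * √μ) := by gcongr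
      _ = _ := by
        have : -((d : ℝ) - 1) / 2 = 1 / 2 - (d : ℝ) / 2 := by ring
        rw [Real.div_rpow (by positivity) hμ0.le, this, Real.rpow_sub hμ0, Real.sqrt_eq_rpow]
        ring
  have hf2 : μ / (8 * Real.pi) * Q ≤
      C₃ * Real.pi ^ ((d : ℝ) / 2) * c ^ (-((d : ℝ) + 1) / 2) * μ ^ (-((d : ℝ) - 1) / 2) := by
    have h1 : (l ^ 2 : ℝ) ^ ((d : ℝ) / 2) = l ^ d := by
      rw [← Real.rpow_natCast, ← Real.rpow_mul hl0.le, ← Real.rpow_natCast]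
      congr 1; push_cast; ring
    have h2 : μ * (l * t⁻¹ ^ (d + 1) * l ^ d) = μ⁻¹ ^ d := by
      have : l * t⁻¹ ^ (d + 1) * l ^ d = μ⁻¹ ^ (d + 1) := by
        rw [hμ, inv_div, div_eq_mul_inv, mul_pow, pow_succ l]; ring
      rw [this, pow_succ]; field_simp
    have h3 : μ⁻¹ ^ d = μ ^ (-((d : ℝ) + 1) / 2) * μ ^ (-((d : ℝ) - 1) / 2) := by
      rw [← Real.rpow_add hμ0, inv_pow, ← Real.rpow_natCast, ← Real.rpow_neg hμ0.le]
      congr 1; ring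
    have h4 : μ ^ (-((d : ℝ) + 1) / 2) ≤ c ^ (-((d : ℝ) + 1) / 2) :=
      Real.rpow_le_rpow_of_nonpos hc hcμ (by
        have : (0 : ℝ) ≤ d := Nat.cast_nonneg d
        linarith)
    have h5 : (8 * Real.pi)⁻¹ ≤ 1 := inv_le_one_of_one_le₀ (by linarith [Real.pi_gt_three])
    calc μ / (8 * Real.pi) * Q
        = (8 * Real.pi)⁻¹ * (C₃ * Real.pi ^ ((d : ℝ) / 2) * (μ * (l * t⁻¹ ^ (d + 1) * l ^ d))) := by
          rw [hQ, Real.mul_rpow hπ.le (by positivity), h1]; ring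
      _ ≤ 1 * (C₃ * Real.pi ^ ((d : ℝ) / 2) *
            (c ^ (-((d : ℝ) + 1) / 2) * μ ^ (-((d : ℝ) - 1) / 2))) := by
          rw [h2, h3]; gcongr
      _ = _ := by ring
  have h6 : 0 < μ ^ (-((d : ℝ) - 1) / 2) := by positivity
  calc _ ≤ _ := add_le_add hf1 hf2
    _ ≤ _ := by rw [add_mul, add_mul]; linarith
end
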